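/- arXiv:2004.01484 — 3 statements merged into one kernel-verified Lean document; each statement's English description precedes it below -/
import Mathlib

section
/- (Novikov 1954) There exists a finitely presented group with unsolvable conjugacy problem: there exist a natural number m and a finite set rels of elements of the free group on Fin m such that, letting G denote the quotient of FreeGroup (Fin m) by the normal closure of rels, the predicate on pairs (l₁, l₂) of lists in List (Fin m × Bool) given by 'there exists g ∈ G with g · (image of FreeGroup.mk l₁ in G) · g⁻¹ = image of FreeGroup.mk l₂ in G' is not a computable predicate (¬ ComputablePred). -/
theorem NovStab_vadd {Γ X : Type} [AddCommGroup Γ] [AddAction Γ X] (g : Γ) (x : X) :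
    AddAction.stabilizer Γ (g +ᵥ x) = AddAction.stabilizer Γ x := by
  ext a
  simp only [AddAction.mem_stabilizer_iff]
  rw [← add_vadd, add_comm, add_vadd]
  exact (vadd_left_cancel_iff g)

theorem NovStab_out {Γ X : Type} [AddCommGroup Γ] [AddAction Γ X] (x : X) :
    ∃ g : Γ, g +ᵥ x = (Quotient.mk (AddAction.orbitRel Γ X) x).out := by
  have h := Quotient.mk_out (s := AddAction.orbitRel Γ X) x
  exact h

theorem NovOrbit_embed {Γ Y I : Type} [AddCommGroup Γ] [AddAction Γ Y]
    (cY : Y → I) (hcY : Function.Injective cY) (S : AddSubgroup Γ)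
    (f : I → Y) (hf : ∀ i, AddAction.stabilizer Γ (f i) = S)
    (hf' : ∀ i j (g : Γ), g +ᵥ f i = f j → i = j) :
    Nonempty (I ≃ {ω : Quotient (AddAction.orbitRel Γ Y) // AddAction.stabilizer Γ ω.out = S}) := by
  apply Function.Embedding.antisymm
  · refine ⟨fun i => ⟨Quotient.mk _ (f i), ?_⟩, ?_⟩
    · obtain ⟨g, hg⟩ := NovStab_out (Γ := Γ) (f i)
      rw [← hg, NovStab_vadd, hf]
    · intro i j hij
      have h2 : (Quotient.mk (AddAction.orbitRel Γ Y) (f i)) = Quotient.mk _ (f j) :=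
        congrArg Subtype.val hij
      have h3 := Quotient.exact h2
      obtain ⟨g, hg⟩ := h3
      exact (hf' j i g hg).symm
  · refine ⟨fun ω => cY ω.1.out, ?_⟩
    intro a b hab
    have := hcY hab
    apply Subtype.ext
    exact Quotient.out_injective this

theorem NovExists_equivariant {Γ X Y I : Type} [AddCommGroup Γ] [AddAction Γ X] [AddAction Γ Y]
    (cX : X → I) (hcX : Function.Injective cX) (cY : Y → I) (hcY : Function.Injective cY)
    (hXY : ∀ x : X, ∃ f : I → Y,
      (∀ i, AddAction.stabilizer Γ (f i) = AddAction.stabilizer Γ x) ∧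
        ∀ i j (g : Γ), g +ᵥ f i = f j → i = j)
    (hYX : ∀ y : Y, ∃ f : I → X,
      (∀ i, AddAction.stabilizer Γ (f i) = AddAction.stabilizer Γ y) ∧
        ∀ i j (g : Γ), g +ᵥ f i = f j → i = j) :
    ∃ e : X ≃ Y, ∀ (g : Γ) x, e (g +ᵥ x) = g +ᵥ e x := by
  classical
  have key : ∀ S : AddSubgroup Γ, Nonempty
      ({ω : Quotient (AddAction.orbitRel Γ X) // AddAction.stabilizer Γ ω.out = S} ≃
       {ω : Quotient (AddAction.orbitRel Γ Y) // AddAction.stabilizer Γ ω.out = S}) := by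
    intro S
    by_cases hx : ∃ x : X, AddAction.stabilizer Γ x = S
    · obtain ⟨x, rfl⟩ := hx
      obtain ⟨f, hf, hf'⟩ := hXY x
      obtain ⟨e1⟩ := NovOrbit_embed cY hcY _ f hf hf'
      obtain ⟨f2, hf2, hf2'⟩ := hYX (f (cX x))
      rw [hf] at hf2
      obtain ⟨e2⟩ := NovOrbit_embed cX hcX _ f2 hf2 hf2'
      exact ⟨e2.symm.trans e1⟩
    · have hy : ¬ ∃ y : Y, AddAction.stabilizer Γ y = S := by
        rintro ⟨y, hy⟩
        obtain ⟨f2, hf2, hf2'⟩ := hYX y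
        exact hx ⟨f2 (cY y), (hf2 _).trans hy⟩
      have : IsEmpty {ω : Quotient (AddAction.orbitRel Γ X) //
          AddAction.stabilizer Γ ω.out = S} := ⟨fun ω => hx ⟨_, ω.2⟩⟩
      have : IsEmpty {ω : Quotient (AddAction.orbitRel Γ Y) //
          AddAction.stabilizer Γ ω.out = S} := ⟨fun ω => hy ⟨_, ω.2⟩⟩
      exact ⟨Equiv.equivOfIsEmpty _ _⟩
  let ef := fun S => Classical.choice (key S)
  let E := Equiv.ofFiberEquiv
    (f := fun ω : Quotient (AddAction.orbitRel Γ X) => AddAction.stabilizer Γ ω.out)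
    (g := fun ω : Quotient (AddAction.orbitRel Γ Y) => AddAction.stabilizer Γ ω.out) ef
  have hE : ∀ ω, AddAction.stabilizer Γ (E ω).out = AddAction.stabilizer Γ ω.out := fun ω =>
    Equiv.ofFiberEquiv_map ef ω
  -- group element carrying the representative to `x`
  have hg : ∀ x : X, ∃ g : Γ, g +ᵥ (Quotient.mk (AddAction.orbitRel Γ X) x).out = x := by
    intro x
    obtain ⟨g, hg⟩ := NovStab_out (Γ := Γ) x
    exact ⟨-g, by rw [← hg, neg_vadd_vadd]⟩
  have hgY : ∀ x : Y, ∃ g : Γ, g +ᵥ (Quotient.mk (AddAction.orbitRel Γ Y) x).out = x := by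
    intro x
    obtain ⟨g, hg⟩ := NovStab_out (Γ := Γ) x
    exact ⟨-g, by rw [← hg, neg_vadd_vadd]⟩
  choose γ hγ using hg
  let F : X → Y := fun x => γ x +ᵥ (E (Quotient.mk _ x)).out
  have eqiff : ∀ ω (a b : Γ), a +ᵥ (Quotient.out ω : X) = b +ᵥ (Quotient.out ω : X) ↔
      a +ᵥ (Quotient.out (E ω) : Y) = b +ᵥ (Quotient.out (E ω) : Y) := by
    intro ω a b
    have h := hE ω
    have h1 : ∀ {Z : Type} [AddAction Γ Z] (z : Z), a +ᵥ z = b +ᵥ z ↔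
        (-b + a) ∈ AddAction.stabilizer Γ z := by
      intro Z _ z
      rw [AddAction.mem_stabilizer_iff, add_vadd, neg_vadd_eq_iff]
    rw [h1, h1, h]
  have orbmk : ∀ (g : Γ) (x : X), (Quotient.mk (AddAction.orbitRel Γ X) (g +ᵥ x)) =
      Quotient.mk _ x := fun g x => Quotient.sound ⟨g, rfl⟩
  have orbmkY : ∀ (g : Γ) (x : Y), (Quotient.mk (AddAction.orbitRel Γ Y) (g +ᵥ x)) =
      Quotient.mk _ x := fun g x => Quotient.sound ⟨g, rfl⟩
  have Fspec : ∀ (g : Γ) (ω : Quotient (AddAction.orbitRel Γ X)),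
      F (g +ᵥ ω.out) = g +ᵥ (E ω).out := by
    intro g ω
    have h0 : Quotient.mk (AddAction.orbitRel Γ X) (g +ᵥ ω.out) = ω := by
      rw [orbmk, Quotient.out_eq]
    have h1 := hγ (g +ᵥ ω.out)
    simp only [F]
    rw [h0] at h1 ⊢
    exact (eqiff _ _ _).1 h1
  have Fbij : Function.Bijective F := by
    constructor
    · intro x y hxy
      have h1 : Quotient.mk (AddAction.orbitRel Γ Y) (F x) = Quotient.mk _ (F y) := by rw [hxy]
      simp only [F] at h1
      rw [orbmkY, orbmkY, Quotient.out_eq, Quotient.out_eq] at h1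
      have h2 := E.injective h1
      have h3 : γ x +ᵥ (E (Quotient.mk _ x)).out = γ y +ᵥ (E (Quotient.mk _ y)).out := hxy
      rw [← h2] at h3
      have h4 := (eqiff _ _ _).2 h3
      rw [hγ x, h2, hγ y] at h4
      exact h4
    · intro y
      obtain ⟨g, hg⟩ := hgY y
      refine ⟨g +ᵥ (E.symm (Quotient.mk _ y)).out, ?_⟩
      rw [Fspec, Equiv.apply_symm_apply, hg]
  refine ⟨Equiv.ofBijective F Fbij, ?_⟩
  intro g x
  simp only [Equiv.ofBijective_apply]
  have h := hγ x
  have h1 : F (g +ᵥ x) = (g + γ x) +ᵥ (E (Quotient.mk _ x)).out := by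
    rw [← Fspec, add_vadd, hγ]
  rw [h1, add_vadd]

open scoped commutatorElement

/-- The universal set with all point stabilisers contained in `T`. -/
structure NovX (V : Type) [AddCommGroup V] (T : Set V) : Type where
  /-- the stabiliser -/
  L : AddSubgroup V
  /-- it is contained in `T` -/
  sub : (L : Set V) ⊆ T
  /-- a coset -/
  pt : V ⧸ L
  /-- a label -/
  lab : Set V

instance NovX.instAct (V : Type) [AddCommGroup V] (T : Set V) : AddAction V (NovX V T) where
  vadd v x := ⟨x.L, x.sub, (v : V ⧸ x.L) + x.pt, x.lab⟩
  zero_vadd x := by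
    rcases x with ⟨L, hL, x, i⟩
    change (⟨L, hL, ((0 : V) : V ⧸ L) + x, i⟩ : NovX V T) = ⟨L, hL, x, i⟩
    simp
  add_vadd v w x := by
    rcases x with ⟨L, hL, x, i⟩
    change (⟨L, hL, ((v + w : V) : V ⧸ L) + x, i⟩ : NovX V T) =
      ⟨L, hL, (v : V ⧸ L) + ((w : V ⧸ L) + x), i⟩
    simp [add_assoc]

theorem NovX.fix_iff {V : Type} [AddCommGroup V] {T : Set V} (v : V)
    (x : NovX V T) : v +ᵥ x = x ↔ v ∈ x.L := by
  rcases x with ⟨L, hL, x, i⟩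
  change (⟨L, hL, (v : V ⧸ L) + x, i⟩ : NovX V T) = ⟨L, hL, x, i⟩ ↔ v ∈ L
  constructor
  · intro h
    simp only [NovX.mk.injEq, heq_eq_eq, true_and, and_true, add_eq_right] at h
    simpa using h
  · intro h
    have : (v : V ⧸ L) = 0 := by simpa using h
    rw [this, zero_add]

theorem NovX.code {V : Type} [AddCommGroup V] [Infinite V] (T : Set V) :
    ∃ c : NovX V T → Set V, Function.Injective c := by
  have h1 : Nonempty (Set V × Set V × Set V ≃ Set V) := by
    rw [← Cardinal.eq]
    have h : Cardinal.aleph0 ≤ Cardinal.mk (Set V) := Cardinal.aleph0_le_mk _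
    simp [Cardinal.mk_prod, -Cardinal.mk_set, Cardinal.mul_eq_self h]
  obtain ⟨e⟩ := h1
  refine ⟨fun x => e ((x.L : Set V), {v : V | (v : V ⧸ x.L) = x.pt}, x.lab), ?_⟩
  rintro ⟨L, hL, x, i⟩ ⟨L', hL', x', i'⟩ h
  have h := e.injective h
  simp only [Prod.mk.injEq, SetLike.coe_set_eq] at h
  obtain ⟨rfl, h2, rfl⟩ := h
  obtain ⟨v, rfl⟩ := QuotientAddGroup.mk_surjective x
  have : v ∈ {w : V | (w : V ⧸ L) = x'} := by rw [← h2]; rfl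
  have h3 : (v : V ⧸ L) = x' := this
  subst h3
  rfl

theorem NovX.half {V P : Type} [AddCommGroup V] [AddCommGroup P] (T : Set V)
    (α β : P →+ V) (hβ : Function.Injective β)
    (hT : ∀ p, α p ∈ T → β p ∈ T) (x : NovX V T) :
    ∃ f : Set V → NovX V T,
      (∀ i p, β p +ᵥ f i = f i ↔ α p +ᵥ x = x) ∧ ∀ i j p, β p +ᵥ f i = f j → i = j := by
  refine ⟨fun i => ⟨(x.L.comap α).map β, ?_, 0, i⟩, ?_, ?_⟩
  · rintro _ ⟨p, hp, rfl⟩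
    exact hT p (x.sub hp)
  · intro i p
    rw [NovX.fix_iff, NovX.fix_iff]
    simp only [AddSubgroup.mem_map, AddSubgroup.mem_comap]
    constructor
    · rintro ⟨q, hq, h⟩
      rwa [← hβ h]
    · intro h
      exact ⟨p, h, rfl⟩
  · intro i j p h
    have := congrArg (fun y : NovX V T => y.lab) h
    exact this

theorem NovX.exists_perm {V P : Type} [AddCommGroup V] [Infinite V] [AddCommGroup P] (T : Set V)
    (α β : P →+ V) (hα : Function.Injective α) (hβ : Function.Injective β)
    (hT : ∀ p, α p ∈ T ↔ β p ∈ T) :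
    ∃ r : Equiv.Perm (NovX V T), ∀ p x, r (α p +ᵥ x) = β p +ᵥ r x := by
  obtain ⟨c, hc⟩ := NovX.code T
  refine @NovExists_equivariant P (NovX V T) (NovX V T) (Set V) _
    (AddAction.compHom _ α) (AddAction.compHom _ β) c hc c hc ?_ ?_
  · intro x
    obtain ⟨f, h1, h2⟩ := NovX.half T α β hβ (fun p => (hT p).1) x
    refine ⟨f, fun i => ?_, h2⟩
    ext p
    exact h1 i p
  · intro x
    obtain ⟨f, h1, h2⟩ := NovX.half T β α hα (fun p => (hT p).2) x
    refine ⟨f, fun i => ?_, h2⟩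
    ext p
    exact h1 i p

section NovGroup

variable {A J P : Type} [Fintype A] [Fintype J] [Fintype P] [DecidableEq A] [DecidableEq P]
  {m : ℕ} (e : A ⊕ J ≃ Fin m) (α β : J → (P → ℤ) →+ (A → ℤ))

/-- word representing a vector -/
noncomputable def novWord (v : A → ℤ) : FreeGroup (Fin m) :=
  ((Finset.univ : Finset A).toList.map fun a => FreeGroup.of (e (Sum.inl a)) ^ v a).prod

/-- the relators -/
noncomputable def novRels : Set (FreeGroup (Fin m)) :=
  (Set.range fun ab : A × A => ⁅FreeGroup.of (e (Sum.inl ab.1)), FreeGroup.of (e (Sum.inl ab.2))⁆) ∪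
  (Set.range fun jp : J × P => FreeGroup.of (e (Sum.inr jp.1)) *
    novWord e (α jp.1 (Pi.single jp.2 1)) * (FreeGroup.of (e (Sum.inr jp.1)))⁻¹ *
    (novWord e (β jp.1 (Pi.single jp.2 1)))⁻¹)

theorem novRels_finite : (novRels e α β).Finite :=
  (Set.finite_range _).union (Set.finite_range _)

/-- generator of the base -/
noncomputable def novGen (a : A) : PresentedGroup (novRels e α β) :=
  PresentedGroup.mk _ (FreeGroup.of (e (Sum.inl a)))

theorem novGen_comm (a b : A) : Commute (novGen e α β a) (novGen e α β b) := by
  have h : PresentedGroup.mk (novRels e α β)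
      ⁅FreeGroup.of (e (Sum.inl a)), FreeGroup.of (e (Sum.inl b))⁆ = 1 :=
    PresentedGroup.one_of_mem (Or.inl ⟨(a, b), rfl⟩)
  rw [map_commutatorElement, commutatorElement_eq_one_iff_commute] at h
  exact h

/-- A homomorphism from `A → ℤ` from commuting elements. -/
theorem nov_hom {G : Type} [Group G] (x : A → G) (hx : ∀ a b, Commute (x a) (x b)) :
    ∃ W : (A → ℤ) →+ Additive G, ∀ v, Additive.toMul (W v) =
      ((Finset.univ : Finset A).toList.map fun a => x a ^ v a).prod := by
  have key : ∀ (l : List A) (v w : A → ℤ), (l.map fun a => x a ^ (v a + w a)).prod =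
      (l.map fun a => x a ^ v a).prod * (l.map fun a => x a ^ w a).prod := by
    intro l v w
    induction l with
    | nil => simp
    | cons b l ih =>
      simp only [List.map_cons, List.prod_cons, ih]
      have : Commute (x b ^ w b) (l.map fun a => x a ^ v a).prod := by
        apply Commute.list_prod_right
        intro y hy
        obtain ⟨c, _, rfl⟩ := List.mem_map.1 hy
        exact ((hx b c).zpow_zpow _ _)
      rw [zpow_add, mul_assoc, mul_assoc, ← mul_assoc (x b ^ w b), this.eq]
      simp only [mul_assoc]
  refine ⟨⟨⟨fun v => Additive.ofMul
    ((Finset.univ : Finset A).toList.map fun a => x a ^ v a).prod, ?_⟩, ?_⟩, fun v => rfl⟩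
  · simp
  · intro v w
    exact congrArg Additive.ofMul (key _ v w)

theorem nov_hom_single {G : Type} [Group G] (x : A → G) (W : (A → ℤ) →+ Additive G)
    (hW : ∀ v, Additive.toMul (W v) =
      ((Finset.univ : Finset A).toList.map fun a => x a ^ v a).prod) (a : A) :
    Additive.toMul (W (Pi.single a 1)) = x a := by
  rw [hW]
  have h : ∀ l : List A, l.Nodup → (l.map fun b => x b ^ (Pi.single a 1 : A → ℤ) b).prod =
      if a ∈ l then x a else 1 := by
    intro l hl
    induction l with
    | nil => simp
    | cons b l ih =>
      rw [List.nodup_cons] at hl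
      simp only [List.map_cons, List.prod_cons, ih hl.2, List.mem_cons]
      by_cases hab : a = b
      · subst hab
        simp [hl.1]
      · have : b ≠ a := fun h => hab h.symm
        simp [hab, this]
  rw [h _ (Finset.nodup_toList _)]
  simp

theorem nov_ext {G : Type} [AddGroup G] (f g : (A → ℤ) →+ G)
    (h : ∀ a, f (Pi.single a 1) = g (Pi.single a 1)) : f = g := by
  ext1 v
  change v ∈ f.eqLocus g
  rw [← Finset.univ_sum_single v]
  apply AddSubgroup.sum_mem
  intro a _
  have h1 : (Pi.single a (v a) : A → ℤ) = v a • Pi.single a 1 := by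
    rw [← Pi.single_smul]; simp
  rw [h1]
  exact AddSubgroup.zsmul_mem _ (h a) _

/-- Base vector group inside the presented group. -/
theorem nov_base : ∃ W : (A → ℤ) →+ Additive (PresentedGroup (novRels e α β)),
    (∀ v, Additive.toMul (W v) = PresentedGroup.mk _ (novWord e v)) ∧
    (∀ a, Additive.toMul (W (Pi.single a 1)) = novGen e α β a) ∧
    ∀ j p, PresentedGroup.mk _ (FreeGroup.of (e (Sum.inr j))) * Additive.toMul (W (α j p)) *
      (PresentedGroup.mk _ (FreeGroup.of (e (Sum.inr j))))⁻¹ = Additive.toMul (W (β j p)) := by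
  obtain ⟨W, hW⟩ := nov_hom (novGen e α β) (novGen_comm e α β)
  have hW' : ∀ v, Additive.toMul (W v) = PresentedGroup.mk (novRels e α β) (novWord e v) := by
    intro v
    rw [hW, novWord, map_list_prod, List.map_map]
    congr 1
  refine ⟨W, hW', nov_hom_single _ W hW, ?_⟩
  intro j
  set r : PresentedGroup (novRels e α β) := PresentedGroup.mk _ (FreeGroup.of (e (Sum.inr j)))
    with hr
  let C : Additive (PresentedGroup (novRels e α β)) →+ Additive (PresentedGroup (novRels e α β)) :=
    MonoidHom.toAdditive (MulAut.conj r).toMonoidHom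
  have h : C.comp (W.comp (α j)) = W.comp (β j) := by
    apply nov_ext
    intro p
    have h2 : PresentedGroup.mk (novRels e α β) _ = 1 :=
      PresentedGroup.one_of_mem (Or.inr ⟨(j, p), rfl⟩)
    rw [map_mul, map_mul, map_mul, map_inv, map_inv, ← hW', ← hW', mul_inv_eq_one] at h2
    exact h2
  intro p
  exact DFunLike.congr_fun h p

/-- Lower bound: non-conjugacy from an invariant set. -/
theorem nov_not_conj [Nonempty A] (hα : ∀ j, Function.Injective (α j))
    (hβ : ∀ j, Function.Injective (β j))
    (T : Set (A → ℤ)) (hT : ∀ j p, α j p ∈ T ↔ β j p ∈ T)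
    (h u : A → ℤ) (hh : ∀ k : ℤ, k • h ∈ T) (hu : u ∉ T)
    (g : PresentedGroup (novRels e α β)) :
    g * PresentedGroup.mk _ (novWord e u) * g⁻¹ ≠ PresentedGroup.mk _ (novWord e h) := by
  choose r hr using fun j => NovX.exists_perm T (α j) (β j) (hα j) (hβ j) (hT j)
  let τ : (A → ℤ) →+ Additive (Equiv.Perm (NovX (A → ℤ) T)) :=
    AddAction.toPermHom (A → ℤ) (NovX (A → ℤ) T)
  let F : FreeGroup (Fin m) →* Equiv.Perm (NovX (A → ℤ) T) :=
    FreeGroup.lift fun i => Sum.elim (fun a => Additive.toMul (τ (Pi.single a 1))) r (e.symm i)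
  have hFx : ∀ a, F (FreeGroup.of (e (Sum.inl a))) = Additive.toMul (τ (Pi.single a 1)) := by
    intro a; simp [F]
  have hFr : ∀ j, F (FreeGroup.of (e (Sum.inr j))) = r j := by
    intro a; simp [F]
  have hcomm : ∀ a b, Commute (Additive.toMul (τ (Pi.single a 1)))
      (Additive.toMul (τ (Pi.single b 1))) := by
    intro a b
    change Additive.toMul (τ (Pi.single a 1) + τ (Pi.single b 1)) =
      Additive.toMul (τ (Pi.single b 1) + τ (Pi.single a 1))
    rw [← map_add, ← map_add, add_comm]
  obtain ⟨W, hW⟩ := nov_hom _ hcomm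
  have hWτ : W = τ := by
    apply nov_ext
    intro p
    exact nov_hom_single _ W hW p
  have hFw : ∀ v, F (novWord e v) = Additive.toMul (τ v) := by
    intro v
    rw [← hWτ, hW, novWord, map_list_prod, List.map_map]
    congr 1
    apply List.map_congr_left
    intro a _
    simp only [Function.comp, map_zpow, hFx]
  have hτ : ∀ v x, (Additive.toMul (τ v)) x = v +ᵥ x := fun v x => rfl
  have hrel : ∀ w ∈ novRels e α β, F w = 1 := by
    rintro w (⟨⟨a, b⟩, rfl⟩ | ⟨⟨j, p⟩, rfl⟩)
    · simp only [map_commutatorElement, hFx]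
      rw [commutatorElement_eq_one_iff_commute]
      exact hcomm a b
    · simp only [map_mul, map_inv, hFr, hFw]
      rw [mul_inv_eq_one, mul_inv_eq_iff_eq_mul]
      ext1 x
      simp only [Equiv.Perm.mul_apply, hτ]
      exact hr j _ x
  let Φ : PresentedGroup (novRels e α β) →* Equiv.Perm (NovX (A → ℤ) T) :=
    PresentedGroup.toGroup (f := fun i =>
      Sum.elim (fun a => Additive.toMul (τ (Pi.single a 1))) r (e.symm i)) hrel
  have hΦ : ∀ w, Φ (PresentedGroup.mk _ w) = F w := by
    intro w
    rfl
  intro hconj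
  have h2 := congrArg Φ hconj
  rw [map_mul, map_mul, map_inv, hΦ, hΦ, hFw, hFw] at h2
  let x0 : NovX (A → ℤ) T := ⟨AddSubgroup.zmultiples h, by
    rintro _ ⟨k, rfl⟩
    exact hh k, 0, ∅⟩
  have h3 : h +ᵥ x0 = x0 := by
    rw [NovX.fix_iff]
    exact AddSubgroup.mem_zmultiples h
  have h4 := DFunLike.congr_fun h2 x0
  rw [hτ, h3] at h4
  simp only [Equiv.Perm.mul_apply, hτ] at h4
  have h5 : u +ᵥ ((Φ g)⁻¹ x0) = (Φ g)⁻¹ x0 := by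
    rw [Equiv.Perm.eq_inv_iff_eq]
    exact h4
  rw [NovX.fix_iff] at h5
  exact hu (((Φ g)⁻¹ x0).sub h5)

end NovGroup

section NovMachine

variable {Q K : Type} [Fintype Q] [Fintype K] [DecidableEq Q] [DecidableEq K]
  (key : Q → K) (tgt : Q → Fin 5 → Q) (rm rc : Q → Fin 5 → ℤ)

/-- last base-five digit -/
def amDig (z : ℤ) : Fin 5 := ⟨(z % 5).toNat, by omega⟩

theorem amDig_mul_add (u : ℤ) (d : Fin 5) : amDig (5 * u + (d : ℕ)) = d := by
  apply Fin.ext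
  simp only [amDig]
  omega

theorem amDiv_mul_add (u : ℤ) (d : Fin 5) : (5 * u + (d : ℕ)) / 5 = u := by
  omega

theorem amDig_spec (z : ℤ) : 5 * (z / 5) + ((amDig z : Fin 5) : ℕ) = z := by
  simp only [amDig]
  omega

/-- step of the affine machine -/
def amStep (c : Q × (K → ℤ)) : Q × (K → ℤ) :=
  (tgt c.1 (amDig (c.2 (key c.1))), Function.update c.2 (key c.1)
    (rm c.1 (amDig (c.2 (key c.1))) * (c.2 (key c.1) / 5) + rc c.1 (amDig (c.2 (key c.1)))))

/-- vector of a configuration -/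
def amVec (c : Q × (K → ℤ)) : Q ⊕ K → ℤ := Sum.elim (Pi.single c.1 1) c.2

/-- one side of a rule -/
def amSide (q : Q) (k : K) (a c : ℤ) : (Option K → ℤ) →+ (Q ⊕ K → ℤ) where
  toFun p := Sum.elim (fun q' => if q' = q then p none else 0)
    (fun k' => if k' = k then a * p (some k') + c * p none else p (some k'))
  map_zero' := by
    ext x; rcases x with x | x <;> simp
  map_add' p p' := by
    ext x; rcases x with x | x
    · simp only [Sum.elim_inl, Pi.add_apply]; split_ifs <;> simp
    · simp only [Sum.elim_inr, Pi.add_apply]; split_ifs <;> ring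

theorem amSide_injective (q : Q) (k : K) (a c : ℤ) (ha : a ≠ 0) :
    Function.Injective (amSide q k a c) := by
  rw [injective_iff_map_eq_zero]
  intro p hp
  have h0 : p none = 0 := by
    have := congrFun hp (Sum.inl q)
    simpa [amSide] using this
  ext x
  rcases x with _ | k'
  · exact h0
  · have := congrFun hp (Sum.inr k')
    simp only [amSide, AddMonoidHom.coe_mk, ZeroHom.coe_mk, Sum.elim_inr, Pi.zero_apply, h0] at this
    split_ifs at this with h
    · simpa [ha] using this
    · exact this

theorem amSide_one (q : Q) (k : K) (a c : ℤ) (p : Option K → ℤ) (hp : p none = 1) :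
    amSide q k a c p = amVec (q, Function.update (fun k => p (some k)) k (a * p (some k) + c)) := by
  ext x
  rcases x with x | x
  · simp [amSide, amVec, hp, Pi.single_apply]
  · by_cases h : x = k
    · subst h; simp [amSide, amVec, hp]
    · simp [amSide, amVec, h]

theorem amSide_vec (q : Q) (k : K) (a c : ℤ) (p : Option K → ℤ) (C : Q × (K → ℤ))
    (h : amSide q k a c p = amVec C) : p none = 1 := by
  have := congrFun h (Sum.inl C.1)
  simp only [amSide, amVec, AddMonoidHom.coe_mk, ZeroHom.coe_mk, Sum.elim_inl,
    Pi.single_eq_same] at this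
  split_ifs at this
  · exact this
  · exact absurd this (by norm_num)

theorem amVec_injective : Function.Injective (amVec : Q × (K → ℤ) → Q ⊕ K → ℤ) := by
  rintro ⟨q, S⟩ ⟨q', S'⟩ h
  have h1 : S = S' := by
    ext k
    exact congrFun h (Sum.inr k)
  have h2 : q = q' := by
    by_contra hne
    have := congrFun h (Sum.inl q)
    simp [amVec, hne] at this
  rw [h1, h2]

/-- words for one-stack configurations -/
def amList {m : ℕ} (gq : Q → Fin m) (gk : K → Fin m) (q : Q) (k : K) (N : ℕ) :
    List (Fin m × Bool) := (gq q, true) :: List.replicate N (gk k, true)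

theorem am_rule (q : Q) (d : Fin 5) (u : K → ℤ) :
    amStep key tgt rm rc (q, Function.update u (key q) (5 * u (key q) + (d : ℕ))) =
      (tgt q d, Function.update u (key q) (rm q d * u (key q) + rc q d)) := by
  simp only [amStep, Function.update_self, amDig_mul_add, amDiv_mul_add, Function.update_idem]

theorem am_main [Nonempty Q] (hrm : ∀ q d, rm q d ≠ 0) :
    ∃ (m : ℕ) (rels : Set (FreeGroup (Fin m))), rels.Finite ∧
      ∃ (gq : Q → Fin m) (gk : K → Fin m), ∀ q k (N : ℕ) q' k' (N' : ℕ),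
        amStep key tgt rm rc (q', Pi.single k' (N' : ℤ)) = (q', Pi.single k' (N' : ℤ)) →
        ((∃ g : PresentedGroup rels,
            g * PresentedGroup.mk rels (FreeGroup.mk (amList gq gk q k N)) * g⁻¹ =
              PresentedGroup.mk rels (FreeGroup.mk (amList gq gk q' k' N'))) ↔
          ∃ n, (amStep key tgt rm rc)^[n] (q, Pi.single k (N : ℤ)) =
            (q', Pi.single k' (N' : ℤ))) := by
  classical
  let e := Fintype.equivFin ((Q ⊕ K) ⊕ (Q × Fin 5))
  let α : Q × Fin 5 → (Option K → ℤ) →+ (Q ⊕ K → ℤ) := fun j =>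
    amSide j.1 (key j.1) 5 (j.2 : ℕ)
  let β : Q × Fin 5 → (Option K → ℤ) →+ (Q ⊕ K → ℤ) := fun j =>
    amSide (tgt j.1 j.2) (key j.1) (rm j.1 j.2) (rc j.1 j.2)
  refine ⟨_, novRels e α β, novRels_finite e α β, fun q => e (Sum.inl (Sum.inl q)),
    fun k => e (Sum.inl (Sum.inr k)), ?_⟩
  intro q k N q' k' N' hh
  obtain ⟨W, hW, hWx, hWr⟩ := nov_base e α β
  have hlist : ∀ q k (N : ℕ), PresentedGroup.mk (novRels e α β)
      (FreeGroup.mk (amList (fun q => e (Sum.inl (Sum.inl q)))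
        (fun k => e (Sum.inl (Sum.inr k))) q k N)) =
      Additive.toMul (W (amVec (q, Pi.single k (N : ℤ)))) := by
    intro q k N
    have h1 : (amVec (q, Pi.single k (N : ℤ)) : Q ⊕ K → ℤ) =
        Pi.single (Sum.inl q) 1 + N • Pi.single (Sum.inr k) 1 := by
      ext x
      rcases x with x | x
      · simp [amVec, Pi.single_apply]
      · simp [amVec, Pi.single_apply]
    have h2 : ∀ (i i' : Fin (Fintype.card ((Q ⊕ K) ⊕ (Q × Fin 5)))),
        FreeGroup.mk ((i, true) :: List.replicate N (i', true)) =
        FreeGroup.of i * FreeGroup.of i' ^ N := by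
      intro i i'
      rw [FreeGroup.of, FreeGroup.of, FreeGroup.pow_mk, FreeGroup.mul_mk]
      simp
    rw [h1, map_add, map_nsmul, toMul_add, toMul_nsmul, hWx, hWx, amList, h2, map_mul, map_pow]
    rfl
  simp only [hlist]
  constructor
  · rintro ⟨g, hg⟩
    by_contra hcon
    let T : Set (Q ⊕ K → ℤ) := {v | ∀ c, v = amVec c →
      ∃ n, (amStep key tgt rm rc)^[n] c = (q', Pi.single k' (N' : ℤ))}
    have good : ∀ c, (amVec c ∈ T) ↔
        ∃ n, (amStep key tgt rm rc)^[n] c = (q', Pi.single k' (N' : ℤ)) := by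
      intro c
      constructor
      · intro h; exact h c rfl
      · intro h c' hc'
        rw [← amVec_injective hc']; exact h
    rw [hW, hW] at hg
    refine nov_not_conj e α β (fun j => amSide_injective _ _ _ _ (by norm_num))
      (fun j => amSide_injective _ _ _ _ (hrm _ _)) T ?_ _ _ ?_ ?_ g hg
    · rintro ⟨q, d⟩ p
      by_cases hp : p none = 1
      · simp only [α, β]
        rw [amSide_one _ _ _ _ _ hp, amSide_one _ _ _ _ _ hp, good, good,
          ← am_rule key tgt rm rc q d (fun k => p (some k))]
        generalize ((q, Function.update (fun k => p (some k)) (key q)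
          (5 * p (some (key q)) + ((d : ℕ) : ℤ))) : Q × (K → ℤ)) = C
        constructor
        · rintro ⟨n, hn⟩
          refine ⟨n, ?_⟩
          rw [← Function.iterate_succ_apply, Function.iterate_succ_apply', hn, hh]
        · rintro ⟨n, hn⟩
          exact ⟨n + 1, by rw [Function.iterate_succ_apply, hn]⟩
      · constructor
        · intro _ c hc
          exact absurd (amSide_vec _ _ _ _ _ _ hc) hp
        · intro _ c hc
          exact absurd (amSide_vec _ _ _ _ _ _ hc) hp
    · intro z c hc
      have hz : z = 1 := by
        have := congrFun hc (Sum.inl c.1)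
        simp only [amVec, Pi.smul_apply, Sum.elim_inl, Pi.single_eq_same, Pi.single_apply,
          smul_eq_mul] at this
        split_ifs at this <;> simpa using this
      rw [hz, one_smul] at hc
      exact ⟨0, (amVec_injective hc).symm⟩
    · rw [good]
      exact hcon
  · rintro ⟨n, hn⟩
    rw [← hn]
    clear hn
    generalize ((q, Pi.single k (N : ℤ)) : Q × (K → ℤ)) = C
    induction n generalizing C with
    | zero => exact ⟨1, by simp⟩
    | succ n ih =>
      obtain ⟨g, hg⟩ := ih (amStep key tgt rm rc C)
      rw [Function.iterate_succ_apply]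
      obtain ⟨q, S⟩ := C
      let d := amDig (S (key q))
      let u : K → ℤ := Function.update S (key q) (S (key q) / 5)
      let p : Option K → ℤ := fun o => o.elim 1 u
      have hS : S = Function.update u (key q) (5 * u (key q) + (d : ℕ)) := by
        simp [u, d, amDig_spec]
      have h1 : amVec (q, S) = α (q, d) p := by
        simp only [α]
        rw [amSide_one _ _ _ _ _ rfl]
        conv_lhs => rw [hS]
        rfl
      have h2 : amVec (amStep key tgt rm rc (q, S)) = β (q, d) p := by
        simp only [β]
        rw [amSide_one _ _ _ _ _ rfl, hS, am_rule]
        rfl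
      have h3 := hWr (q, d) p
      rw [← h1, ← h2] at h3
      refine ⟨g * PresentedGroup.mk _ (FreeGroup.of (e (Sum.inr (q, d)))), ?_⟩
      rw [← hg, ← h3]
      simp only [mul_inv_rev, mul_assoc]

end NovMachine

section NovTM

open Turing Turing.PartrecToTM2

/-- statements of the stack machine -/
abbrev NSt := TM2.Stmt (fun _ : K' => Γ') Λ' (Option Γ')

def nEnc : Γ' → ℕ
  | Γ'.consₗ => 1
  | Γ'.cons => 2
  | Γ'.bit0 => 3
  | Γ'.bit1 => 4

def nDec : Fin 5 → Option Γ'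
  | 0 => none
  | 1 => some Γ'.consₗ
  | 2 => some Γ'.cons
  | 3 => some Γ'.bit0
  | 4 => some Γ'.bit1

def nEncL : List Γ' → ℕ
  | [] => 0
  | a :: l => 5 * nEncL l + nEnc a

theorem nDec_encL (l : List Γ') : nDec (amDig (nEncL l : ℤ)) = l.head? := by
  rcases l with _ | ⟨a, l⟩
  · rfl
  · have h : ∀ d : Fin 5, (d : ℕ) = nEnc a → nDec (amDig (nEncL (a :: l) : ℤ)) = nDec d := by
      intro d hd
      rw [nEncL, ← hd]
      push_cast
      rw [amDig_mul_add]
    cases a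
    · rw [h 1 rfl]; rfl
    · rw [h 2 rfl]; rfl
    · rw [h 3 rfl]; rfl
    · rw [h 4 rfl]; rfl

theorem nDiv_encL (l : List Γ') : (nEncL l : ℤ) / 5 = nEncL l.tail := by
  rcases l with _ | ⟨a, l⟩
  · rfl
  · have : nEnc a < 5 := by cases a <;> decide
    simp only [nEncL, List.tail_cons]
    omega

/-- stack used by a statement -/
def nKey : NSt × Option Γ' → K'
  | (TM2.Stmt.push k _ _, _) => k
  | (TM2.Stmt.peek k _ _, _) => k
  | (TM2.Stmt.pop k _ _, _) => k
  | _ => K'.main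

def nTgt : NSt × Option Γ' → Fin 5 → NSt × Option Γ'
  | (TM2.Stmt.push _ _ q, s), _ => (q, s)
  | (TM2.Stmt.peek _ f q, s), d => (q, f s (nDec d))
  | (TM2.Stmt.pop _ f q, s), d => (q, f s (nDec d))
  | (TM2.Stmt.load a q, s), _ => (q, a s)
  | (TM2.Stmt.branch p q₁ q₂, s), _ => (cond (p s) q₁ q₂, s)
  | (TM2.Stmt.goto l, s), _ => (tr (l s), s)
  | (TM2.Stmt.halt, s), _ => (TM2.Stmt.halt, s)

/-- multiplier -/
def nRm : NSt × Option Γ' → Fin 5 → ℤ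
  | (TM2.Stmt.push _ _ _, _), _ => 25
  | (TM2.Stmt.pop _ _ _, _), _ => 1
  | _, _ => 5

/-- offset -/
def nRc : NSt × Option Γ' → Fin 5 → ℤ
  | (TM2.Stmt.push _ f _, s), d => 5 * (d : ℕ) + nEnc (f s)
  | (TM2.Stmt.pop _ _ _, _), _ => 0
  | _, d => (d : ℕ)

theorem nRm_ne (q : NSt × Option Γ') (d : Fin 5) : nRm q d ≠ 0 := by
  rcases q with ⟨q, s⟩
  cases q <;> simp [nRm]

/-- micro-step -/
abbrev nStep : (NSt × Option Γ') × (K' → ℤ) → (NSt × Option Γ') × (K' → ℤ) :=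
  amStep nKey nTgt nRm nRc

/-- code of all stacks -/
def nStk (S : K' → List Γ') : K' → ℤ := fun k => (nEncL (S k) : ℤ)

theorem nStk_update (S : K' → List Γ') (k : K') (l : List Γ') :
    nStk (Function.update S k l) = Function.update (nStk S) k (nEncL l : ℤ) := by
  ext k'
  by_cases h : k' = k
  · subst h; simp [nStk]
  · simp [nStk, h]

theorem nStep_push (k f) (q : NSt) (s S) : nStep ((TM2.Stmt.push k f q, s), nStk S) =
    ((q, s), nStk (Function.update S k (f s :: S k))) := by
  rw [nStk_update]
  simp only [nStep, amStep, nKey, nTgt, nRm, nRc, nEncL]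
  congr 2
  have := amDig_spec (nStk S k)
  simp only [nStk] at this ⊢
  push_cast
  linarith

theorem nStep_id (q : NSt) (s) (S : K' → ℤ) (h1 : ∀ d, nRm (q, s) d = 5)
    (h2 : ∀ d, nRc (q, s) d = (d : ℕ)) : nStep ((q, s), S) =
    (nTgt (q, s) (amDig (S (nKey (q, s)))), S) := by
  simp only [nStep, amStep, h1, h2, amDig_spec, Function.update_eq_self]

theorem nStep_peek (k f) (q : NSt) (s S) : nStep ((TM2.Stmt.peek k f q, s), nStk S) =
    ((q, f s (S k).head?), nStk S) := by
  rw [nStep_id _ _ _ (fun _ => rfl) (fun _ => rfl)]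
  simp only [nTgt, nKey, nStk, nDec_encL]

theorem nStep_pop (k f) (q : NSt) (s S) : nStep ((TM2.Stmt.pop k f q, s), nStk S) =
    ((q, f s (S k).head?), nStk (Function.update S k (S k).tail)) := by
  rw [nStk_update]
  simp only [nStep, amStep, nKey, nTgt, nRm, nRc, one_mul, add_zero]
  simp only [nStk, nDec_encL, nDiv_encL]

theorem nStep_load (a) (q : NSt) (s S) : nStep ((TM2.Stmt.load a q, s), S) = ((q, a s), S) :=
  nStep_id _ _ _ (fun _ => rfl) (fun _ => rfl)

theorem nStep_branch (p) (q₁ q₂ : NSt) (s S) : nStep ((TM2.Stmt.branch p q₁ q₂, s), S) =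
    ((cond (p s) q₁ q₂, s), S) :=
  nStep_id _ _ _ (fun _ => rfl) (fun _ => rfl)

theorem nStep_goto (l) (s S) : nStep (((TM2.Stmt.goto l : NSt), s), S) = ((tr (l s), s), S) :=
  nStep_id _ _ _ (fun _ => rfl) (fun _ => rfl)

theorem nStep_halt (s S) : nStep (((TM2.Stmt.halt : NSt), s), S) = ((TM2.Stmt.halt, s), S) :=
  nStep_id _ _ _ (fun _ => rfl) (fun _ => rfl)

/-- micro-configuration of a configuration -/
def nMic (c : Cfg') : (NSt × Option Γ') × (K' → ℤ) :=
  ((c.l.elim TM2.Stmt.halt tr, c.var), nStk c.stk)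

theorem n_forward_aux (q : NSt) (s S) :
    ∃ n, nStep^[n] ((q, s), nStk S) = nMic (TM2.stepAux q s S) := by
  induction q generalizing s S with
  | push k f q ih =>
    obtain ⟨n, hn⟩ := ih s (Function.update S k (f s :: S k))
    exact ⟨n + 1, by rw [Function.iterate_succ_apply, nStep_push, hn]; rfl⟩
  | peek k f q ih =>
    obtain ⟨n, hn⟩ := ih (f s (S k).head?) S
    exact ⟨n + 1, by rw [Function.iterate_succ_apply, nStep_peek, hn]; rfl⟩
  | pop k f q ih =>
    obtain ⟨n, hn⟩ := ih (f s (S k).head?) (Function.update S k (S k).tail)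
    exact ⟨n + 1, by rw [Function.iterate_succ_apply, nStep_pop, hn]; rfl⟩
  | load a q ih =>
    obtain ⟨n, hn⟩ := ih (a s) S
    exact ⟨n + 1, by rw [Function.iterate_succ_apply, nStep_load, hn]; rfl⟩
  | branch p q₁ q₂ ih₁ ih₂ =>
    cases hp : p s with
    | true =>
      obtain ⟨n, hn⟩ := ih₁ s S
      exact ⟨n + 1, by
        rw [Function.iterate_succ_apply, nStep_branch, TM2.stepAux, hp]; exact hn⟩
    | false =>
      obtain ⟨n, hn⟩ := ih₂ s S
      exact ⟨n + 1, by
        rw [Function.iterate_succ_apply, nStep_branch, TM2.stepAux, hp]; exact hn⟩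
  | goto l => exact ⟨1, by rw [Function.iterate_one, nStep_goto]; rfl⟩
  | halt => exact ⟨0, rfl⟩

theorem n_forward (a b : Cfg') (h : StateTransition.Reaches (TM2.step tr) a b) :
    ∃ n, nStep^[n] (nMic a) = nMic b := by
  induction h with
  | refl => exact ⟨0, rfl⟩
  | @tail b c _ hbc ih =>
    obtain ⟨n, hn⟩ := ih
    rcases b with ⟨_ | l, s, S⟩
    · exact absurd hbc (by intro h; cases h)
    · have hbc' : TM2.stepAux (tr l) s S = c := Option.some.inj hbc
      obtain ⟨k, hk⟩ := n_forward_aux (tr l) s S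
      refine ⟨k + n, ?_⟩
      rw [Function.iterate_add_apply, hn, ← hbc']
      exact hk

theorem n_backward (n : ℕ) : ∀ (q : NSt) s S, (nStep^[n] ((q, s), nStk S)).1.1 = TM2.Stmt.halt →
    (StateTransition.eval (TM2.step tr) (TM2.stepAux q s S)).Dom := by
  have hd : ∀ s S, (StateTransition.eval (TM2.step tr)
      (TM2.stepAux (TM2.Stmt.halt : NSt) s S)).Dom := by
    intro s S
    rw [Part.dom_iff_mem]
    exact ⟨_, StateTransition.mem_eval.2 ⟨Relation.ReflTransGen.refl, rfl⟩⟩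
  induction n with
  | zero =>
    intro q s S h
    have h : q = TM2.Stmt.halt := h
    subst h
    exact hd s S
  | succ n ih =>
    intro q s S h
    rw [Function.iterate_succ_apply] at h
    cases q with
    | push k f q => rw [nStep_push] at h; exact ih q s (Function.update S k (f s :: S k)) h
    | peek k f q => rw [nStep_peek] at h; exact ih q (f s (S k).head?) S h
    | pop k f q => 
      rw [nStep_pop] at h
      exact ih q (f s (S k).head?) (Function.update S k (S k).tail) h
    | load a q => rw [nStep_load] at h; exact ih q (a s) S h
    | branch p q₁ q₂ =>
      rw [nStep_branch] at h
      rw [TM2.stepAux]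
      cases hp : p s with
      | true => rw [hp] at h; exact ih _ _ _ h
      | false => rw [hp] at h; exact ih _ _ _ h
    | goto l =>
      rw [nStep_goto] at h
      rw [StateTransition.reaches_eval (b := TM2.stepAux (tr (l s)) s S)]
      · exact ih _ _ _ h
      · exact Relation.ReflTransGen.single rfl
    | halt => exact hd s S

/-- binary input code -/
def novE : ℕ → ℕ
  | 0 => 2
  | n + 1 => 5 * novE ((n + 1) / 2) + (3 + (n + 1) % 2)

theorem novE_pos (n : ℕ) (hn : 0 < n) : novE n = 5 * novE (n / 2) + (3 + n % 2) := by
  obtain ⟨n, rfl⟩ : ∃ k, n = k + 1 := ⟨n - 1, by omega⟩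
  rw [novE]

theorem nEncL_pos (p : PosNum) : nEncL (trPosNum p ++ [Γ'.cons]) = novE (p : ℕ) := by
  induction p with
  | one =>
    have h : novE 1 = 14 := by rw [novE_pos 1 (by norm_num)]; simp [novE]
    simp [trPosNum, nEncL, nEnc, h]
  | bit0 p ih =>
    have h := PosNum.cast_pos (α := ℕ) p
    rw [novE_pos _ (PosNum.cast_pos _)]
    simp only [trPosNum, List.cons_append, nEncL, ih, nEnc, PosNum.cast_bit0]
    have h1 : ((p : ℕ) + p) / 2 = p := by omega
    have h2 : ((p : ℕ) + p) % 2 = 0 := by omega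
    rw [h1, h2]
  | bit1 p ih =>
    rw [novE_pos _ (PosNum.cast_pos _)]
    simp only [trPosNum, List.cons_append, nEncL, ih, nEnc, PosNum.cast_bit1]
    have h1 : ((p : ℕ) + p + 1) / 2 = p := by omega
    have h2 : ((p : ℕ) + p + 1) % 2 = 1 := by omega
    rw [h1, h2]

theorem nEncL_trList (n : ℕ) : nEncL (trList [n]) = novE n := by
  have h : ((n : Num) : ℕ) = n := Num.to_of_nat n
  simp only [trList, trNat]
  conv_rhs => rw [← h]
  cases (n : Num) with
  | zero => simp [trNum, nEncL, nEnc, novE]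
  | pos p => exact nEncL_pos p

theorem novE_primrec : Primrec novE := by
  have h : Primrec₂ (fun (_ : Unit) (n : ℕ) => novE n) := by
    refine Primrec.nat_strong_rec _ (g := fun _ l => if l.length = 0 then some 2 else
      (l[l.length / 2]?).map fun x => 5 * x + (3 + l.length % 2)) ?_ ?_
    · refine Primrec.ite ?_ (Primrec.const _) ?_
      · exact Primrec.eq.comp (Primrec.list_length.comp Primrec.snd) (Primrec.const 0)
      · refine Primrec.option_map ?_ ?_
        · exact Primrec.list_getElem?.comp Primrec.snd
            (Primrec.nat_div.comp (Primrec.list_length.comp Primrec.snd) (Primrec.const 2))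
        · refine Primrec.nat_add.comp (Primrec.nat_mul.comp (Primrec.const 5) Primrec.snd) ?_
          refine Primrec.nat_add.comp (Primrec.const 3) (Primrec.nat_mod.comp
            (Primrec.list_length.comp (Primrec.snd.comp Primrec.fst)) (Primrec.const 2))
    · intro _ n
      rcases Nat.eq_zero_or_pos n with rfl | hn
      · simp [novE]
      · have : n / 2 < n := by omega
        rw [novE_pos n hn]
        simp [this, hn.ne']
  exact h.comp (Primrec.const ()) Primrec.id

theorem amList_primrec {Q K : Type} {m : ℕ} (gq : Q → Fin m) (gk : K → Fin m) (q : Q) (k : K) :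
    Primrec (amList gq gk q k) := by
  have h : Primrec (fun N : ℕ => (gq q, true) ::
      ((List.range N).map fun _ => (gk k, true))) :=
    Primrec.list_cons.comp (Primrec.const _)
      (Primrec.list_map Primrec.list_range (Primrec.const (gk k, true)).to₂)
  refine h.of_eq fun N => ?_
  simp [amList, List.map_const']

theorem nStk_elim (L : List Γ') :
    nStk (K'.elim L [] [] []) = Pi.single K'.main (nEncL L : ℤ) := by
  ext k
  cases k <;> simp [nStk, nEncL]

theorem nov_universal : ∃ c : ToPartrec.Code, ∀ n : ℕ,
    ((Denumerable.ofNat Nat.Partrec.Code n).eval 0).Dom ↔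
      ∃ k, nStep^[k] ((tr (trNormal c Cont'.halt), none), Pi.single K'.main (novE n : ℤ)) =
        ((TM2.Stmt.halt, none), Pi.single K'.main (novE 0 : ℤ)) := by
  let U : ℕ →. ℕ := fun n => ((Denumerable.ofNat Nat.Partrec.Code n).eval 0).map fun _ => 0
  have hU : Partrec U := by
    refine Partrec.map ?_ (Computable.const 0).to₂
    exact Nat.Partrec.Code.eval_part.comp (Computable.ofNat _) (Computable.const 0)
  obtain ⟨c, hc⟩ := ToPartrec.Code.exists_code (Nat.Partrec'.part_iff₁.2 hU)
  refine ⟨c, fun n => ?_⟩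
  have hcn : c.eval [n] = pure <$> U n := hc ⟨[n], rfl⟩
  have hev := tr_eval c [n]
  rw [hcn] at hev
  have hinit : nMic (init c [n]) =
      ((tr (trNormal c Cont'.halt), none), Pi.single K'.main (novE n : ℤ)) := by
    rw [← nEncL_trList, ← nStk_elim]; rfl
  have hhalt : nMic (halt [0]) =
      ((TM2.Stmt.halt, none), Pi.single K'.main (novE 0 : ℤ)) := by
    rw [← nEncL_trList, ← nStk_elim]; rfl
  refine Iff.trans (b := ∃ k, nStep^[k] (nMic (init c [n])) = nMic (halt [0])) ?_
    (by rw [hinit, hhalt]; exact Iff.rfl)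
  constructor
  · intro hd
    apply n_forward
    have : halt [0] ∈ StateTransition.eval (TM2.step tr) (init c [n]) := by
      rw [hev]
      have h0 : (0 : ℕ) ∈ U n := Part.mem_map (fun _ => 0) (Part.get_mem hd)
      exact Part.mem_map halt (Part.mem_map (pure : ℕ → List ℕ) h0)
    exact (StateTransition.mem_eval.1 this).1
  · rintro ⟨k, hk⟩
    have h1 := n_backward k (tr (trNormal c Cont'.halt)) none (K'.elim (trList [n]) [] [] []) (by
      change (nStep^[k] (nMic (init c [n]))).1.1 = _
      rw [hk]; rfl)
    have h2 : (StateTransition.eval (TM2.step tr) (init c [n])).Dom := by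
      have h3 : StateTransition.Reaches (TM2.step tr) (init c [n])
          (TM2.stepAux (tr (trNormal c Cont'.halt)) none (K'.elim (trList [n]) [] [] [])) :=
        Relation.ReflTransGen.single rfl
      exact (StateTransition.reaches_eval h3) ▸ h1
    rw [hev] at h2
    exact h2

/-- the stacks are finitely many -/
instance novFintypeK : Fintype K' :=
  ⟨{K'.main, K'.rev, K'.aux, K'.stack}, by intro x; cases x <;> simp⟩

/-- reachable statements -/
def nSupp (c : ToPartrec.Code) : Set NSt :=
  {q | q = TM2.Stmt.halt ∨ some q ∈ TM2.stmts tr (codeSupp c Cont'.halt)}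

theorem nSupp_finite (c : ToPartrec.Code) : (nSupp c).Finite := by
  apply (Set.finite_singleton (TM2.Stmt.halt : NSt)).union
  exact (Finset.finite_toSet (TM2.stmts tr (codeSupp c Cont'.halt))).preimage
    (Option.some_injective _).injOn

theorem nSupp_tr (c : ToPartrec.Code) (l : Λ') (hl : l ∈ codeSupp c Cont'.halt) :
    tr l ∈ nSupp c := by
  right
  change some (tr l) ∈ TM2.stmts tr (codeSupp c Cont'.halt)
  classical
  refine Finset.some_mem_insertNone.2 ?_
  exact Finset.mem_biUnion.2 ⟨l, hl, TM2.stmts₁_self⟩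

theorem nSupp_start (c : ToPartrec.Code) : tr (trNormal c Cont'.halt) ∈ nSupp c :=
  nSupp_tr c _ (codeSupp_self _ _ (trStmts₁_self _))

theorem nSupp_tgt (c : ToPartrec.Code) (q : NSt × Option Γ') (hq : q.1 ∈ nSupp c) (d : Fin 5) :
    (nTgt q d).1 ∈ nSupp c := by
  rcases q with ⟨q, s⟩
  rcases hq with hq | hq
  · left
    simp only at hq
    subst hq
    rfl
  · have key : ∀ q', q' ∈ TM2.stmts₁ q → q' ∈ nSupp c := fun q' h =>
      Or.inr (TM2.stmts_trans h hq)
    cases q with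
    | push k f q => exact key _ (by simp [TM2.stmts₁, nTgt, TM2.stmts₁_self])
    | peek k f q => exact key _ (by simp [TM2.stmts₁, nTgt, TM2.stmts₁_self])
    | pop k f q => exact key _ (by simp [TM2.stmts₁, nTgt, TM2.stmts₁_self])
    | load a q => exact key _ (by simp [TM2.stmts₁, nTgt, TM2.stmts₁_self])
    | branch p q₁ q₂ =>
      apply key
      simp only [nTgt]
      cases p s <;> simp [TM2.stmts₁, TM2.stmts₁_self]
    | goto l =>
      have h := @TM2.stmts_supportsStmt _ _ _ _ ⟨trNormal c Cont'.halt⟩ _ _ _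
        (tr_supports c Cont'.halt) hq
      exact nSupp_tr c _ (h s)
    | halt => exact Or.inl rfl

end NovTM

/-- **Novikov (1954):** there exists a finitely presented group with unsolvable
conjugacy problem. -/
theorem exists_finitely_presented_group_with_unsolvable_conjugacy_problem :
    ∃ (m : ℕ) (rels : Set (FreeGroup (Fin m))), rels.Finite ∧
      ¬ ComputablePred fun p : List (Fin m × Bool) × List (Fin m × Bool) =>
          ∃ g : PresentedGroup rels,
            g * PresentedGroup.mk rels (FreeGroup.mk p.1) * g⁻¹ =
              PresentedGroup.mk rels (FreeGroup.mk p.2) := by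
  classical
  obtain ⟨c, hc⟩ := nov_universal
  let Q := {q : NSt × Option Turing.PartrecToTM2.Γ' // q.1 ∈ nSupp c}
  have hfin : Finite Q := by
    have h : {q : NSt × Option Turing.PartrecToTM2.Γ' | q.1 ∈ nSupp c}.Finite := by
      refine ((nSupp_finite c).prod (Set.finite_univ)).subset ?_
      intro q hq
      exact ⟨hq, trivial⟩
    exact h.to_subtype
  have := Fintype.ofFinite Q
  let q0 : Q := ⟨(Turing.PartrecToTM2.tr (Turing.PartrecToTM2.trNormal c
    Turing.PartrecToTM2.Cont'.halt), none), nSupp_start c⟩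
  let qh : Q := ⟨(Turing.TM2.Stmt.halt, none), Or.inl rfl⟩
  have : Nonempty Q := ⟨q0⟩
  let key : Q → Turing.PartrecToTM2.K' := fun q => nKey q.1
  let tgt : Q → Fin 5 → Q := fun q d => ⟨nTgt q.1 d, nSupp_tgt c q.1 q.2 d⟩
  let rm : Q → Fin 5 → ℤ := fun q d => nRm q.1 d
  let rc : Q → Fin 5 → ℤ := fun q d => nRc q.1 d
  let emb : Q × (Turing.PartrecToTM2.K' → ℤ) →
    (NSt × Option Turing.PartrecToTM2.Γ') × (Turing.PartrecToTM2.K' → ℤ) := Prod.map Subtype.val id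
  have hemb : Function.Injective emb := Subtype.val_injective.prodMap Function.injective_id
  have hsemi : Function.Semiconj emb (amStep key tgt rm rc) nStep := fun C => rfl
  obtain ⟨m, rels, hrels, gq, gk, hmain⟩ := am_main key tgt rm rc (fun q d => nRm_ne _ _)
  refine ⟨m, rels, hrels, fun hcomp => ?_⟩
  refine ComputablePred.halting_problem 0 (ComputablePred.computable_of_manyOneReducible ?_ hcomp)
  refine ⟨fun x => (amList gq gk q0 Turing.PartrecToTM2.K'.main (novE (Encodable.encode x)),
    amList gq gk qh Turing.PartrecToTM2.K'.main (novE 0)), ?_, ?_⟩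
  · apply Primrec.to_comp
    exact Primrec.pair ((amList_primrec gq gk q0 _).comp (novE_primrec.comp Primrec.encode))
      (Primrec.const _)
  · intro x
    have h1 := hc (Encodable.encode x)
    rw [Denumerable.ofNat_encode] at h1
    have h2 := hmain q0 Turing.PartrecToTM2.K'.main (novE (Encodable.encode x)) qh
      Turing.PartrecToTM2.K'.main (novE 0) (hemb (by rw [hsemi.eq]; exact nStep_halt _ _))
    simp only
    rw [h1, h2]
    refine exists_congr fun n => ?_
    rw [← hemb.eq_iff, (hsemi.iterate_right n).eq]
    rfl
end

section
/- (Post 1947, Markov 1947) There exists a finitely presented monoid with unsolvable word problem: there exist a natural number m and a finite set R of pairs of elements of the free monoid on Fin m such that, letting c be the monoid congruence on FreeMonoid (Fin m) generated by R (i.e. conGen of the relation determined by R), the predicate on pairs (u, v) of lists in List (Fin m) given by 'the words u and v are related by c, i.e. their images in the quotient monoid FreeMonoid (Fin m) ⧸ c coincide' is not a computable predicate (¬ ComputablePred). -/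
namespace WordProblem
open Turing

/-- Letters of the alphabet. -/
inductive Letter (Γ Q : Type) : Type
  | sym : Γ → Letter Γ Q
  | st : Q → Letter Γ Q
  | left : Letter Γ Q
  | right : Letter Γ Q
  | zero : Letter Γ Q

instance (Γ Q : Type) [Finite Γ] [Finite Q] : Finite (Letter Γ Q) := by
  let f : Letter Γ Q → Γ ⊕ Q ⊕ Fin 3 := fun x => match x with
    | .sym a => .inl a
    | .st q => .inr (.inl q)
    | .left => .inr (.inr 0)
    | .right => .inr (.inr 1)
    | .zero => .inr (.inr 2)
  refine Finite.of_injective f ?_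
  intro x y h
  cases x <;> cases y <;> simp_all [f]

/-- States on which letters act (reading words from right to left). -/
inductive Sem (Γ : Type) [Inhabited Γ] : Type
  | start : Sem Γ
  | rt : ListBlank Γ → Sem Γ
  | fn : (ListBlank Γ → Prop) → Sem Γ

section
variable {Γ Λ : Type} [Inhabited Γ] [Inhabited Λ] (M : TM0.Machine Γ Λ)

/-- The machine does not halt when started in state `q` on the tape `l`, `v`. -/
def NH (q : Λ) (l v : ListBlank Γ) : Prop :=
  ¬ (StateTransition.eval (TM0.step M) ⟨q, Tape.mk' l v⟩).Dom

variable (S : Set Λ)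

/-- Action of a letter. -/
def act : Letter Γ S → Sem Γ → Sem Γ
  | .sym a, .rt v => .rt (v.cons a)
  | .sym a, .fn F => .fn fun l => F (l.cons a)
  | .st q, .rt v => .fn fun l => NH M q l v
  | .left, .fn F => .fn fun _ => F (ListBlank.mk [])
  | .right, .start => .rt (ListBlank.mk [])
  | _, _ => .fn fun _ => False

/-- Action of a word. -/
def actHom : FreeMonoid (Letter Γ S) →* Function.End (Sem Γ) :=
  FreeMonoid.lift (fun x => (act M S x : Function.End (Sem Γ)))

/-- The defining relations: pairs of short words with the same action. -/
def rels : Set (FreeMonoid (Letter Γ S) × FreeMonoid (Letter Γ S)) :=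
  {p | p.1.toList.length ≤ 3 ∧ p.2.toList.length ≤ 3 ∧ actHom M S p.1 = actHom M S p.2}

theorem rels_finite [Finite Γ] [Finite S] : (rels M S).Finite := by
  have h := List.finite_length_le (Letter Γ S) 3
  refine (h.prod h).subset ?_
  rintro ⟨x, y⟩ ⟨hx, hy, -⟩
  exact ⟨hx, hy⟩

/-- An abstract model of the relations. -/
structure Model (Q : Type) [Monoid Q] where
  f : Letter Γ S → Q
  hf : ∀ p ∈ rels M S, FreeMonoid.lift f p.1 = FreeMonoid.lift f p.2

variable {M S} {Q : Type} [Monoid Q] (m : Model M S Q)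

namespace Model

theorem rel (x y : List (Letter Γ S)) (hx : x.length ≤ 3) (hy : y.length ≤ 3)
    (h : ∀ s, x.foldr (act M S) s = y.foldr (act M S) s) :
    (x.map m.f).prod = (y.map m.f).prod := by
  have key : ∀ (z : List (Letter Γ S)) s,
      actHom M S (FreeMonoid.ofList z) s = z.foldr (act M S) s := by
    intro z s
    induction z with
    | nil => rfl
    | cons a z ih =>
      rw [FreeMonoid.ofList_cons, map_mul, List.foldr_cons, ← ih]
      rfl
  have := m.hf (FreeMonoid.ofList x, FreeMonoid.ofList y)
    ⟨hx, hy, funext fun s => by rw [key, key, h]⟩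
  simpa [FreeMonoid.lift_apply] using this

theorem left_blank : m.f .left * m.f (.sym default) = m.f .left := by
  have := m.rel [.left, .sym default] [.left] (by simp) (by simp) ?_
  · simpa using this
  · have : ListBlank.cons (default : Γ) (ListBlank.mk []) = ListBlank.mk [] :=
      Quotient.sound' (Or.inr ⟨1, rfl⟩)
    rintro (_ | v | F) <;> simp [act, this]

theorem right_blank : m.f (.sym default) * m.f .right = m.f .right := by
  have := m.rel [.sym default, .right] [.right] (by simp) (by simp) ?_
  · simpa using this
  · have : ListBlank.cons (default : Γ) (ListBlank.mk []) = ListBlank.mk [] :=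
      Quotient.sound' (Or.inr ⟨1, rfl⟩)
    rintro (_ | v | F) <;> simp [act, this]

theorem zero_mul (x) : m.f .zero * m.f x = m.f .zero := by
  have := m.rel [.zero, x] [.zero] (by simp) (by simp) ?_
  · simpa using this
  · rintro (_ | v | F) <;> simp [act]

theorem mul_zero (x) : m.f x * m.f .zero = m.f .zero := by
  have := m.rel [x, .zero] [.zero] (by simp) (by simp) ?_
  · simpa using this
  · cases x <;> rintro (_ | v | F) <;> simp [act]

theorem NH_step {q q' : Λ} {l v l' v' : ListBlank Γ}
    (h : TM0.step M ⟨q, Tape.mk' l v⟩ = some ⟨q', Tape.mk' l' v'⟩) :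
    NH M q l v ↔ NH M q' l' v' := by
  unfold NH
  rw [StateTransition.reaches_eval (Relation.ReflTransGen.single h)]

theorem NH_none {q : Λ} {l v : ListBlank Γ} {a : Γ} (h : M q a = none) :
    ¬ NH M q l (v.cons a) := by
  unfold NH
  rw [not_not, Part.dom_iff_mem]
  exact ⟨_, StateTransition.mem_eval.2 ⟨.refl, by simp [TM0.step, h]⟩⟩

theorem halt_rel (q : S) (a : Γ) (h : M q a = none) :
    m.f (.st q) * m.f (.sym a) = m.f .zero := by
  have := m.rel [.st q, .sym a] [.zero] (by simp) (by simp) ?_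
  · simpa using this
  · rintro (_ | v | F) <;> simp [act, NH_none h]

theorem write_rel (q q' : S) (a b : Γ) (h : M q a = some (q'.1, .write b)) :
    m.f (.st q) * m.f (.sym a) = m.f (.st q') * m.f (.sym b) := by
  have := m.rel [.st q, .sym a] [.st q', .sym b] (by simp) (by simp) ?_
  · simpa using this
  · rintro (_ | v | F) <;> simp [act]
    funext l
    exact propext (NH_step (by simp [TM0.step, h]))

theorem right_rel (q q' : S) (a : Γ) (h : M q a = some (q'.1, .move .right)) :
    m.f (.st q) * m.f (.sym a) = m.f (.sym a) * m.f (.st q') := by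
  have := m.rel [.st q, .sym a] [.sym a, .st q'] (by simp) (by simp) ?_
  · simpa using this
  · rintro (_ | v | F) <;> simp [act]
    funext l
    exact propext (NH_step (by simp [TM0.step, h]))

theorem left_rel (q q' : S) (a b : Γ) (h : M q a = some (q'.1, .move .left)) :
    m.f (.sym b) * m.f (.st q) * m.f (.sym a) = m.f (.st q') * m.f (.sym b) * m.f (.sym a) := by
  have := m.rel [.sym b, .st q, .sym a] [.st q', .sym b, .sym a] (by simp) (by simp) ?_
  · simpa [mul_assoc] using this
  · rintro (_ | v | F) <;> simp [act]
    funext l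
    exact propext (NH_step (by simp [TM0.step, h]))

/-- Value of the left part of the tape. -/
def lval (l : ListBlank Γ) : Q :=
  l.liftOn (fun l => m.f .left * (l.reverse.map fun a => m.f (.sym a)).prod) (by
    rintro a _ ⟨i, rfl⟩
    induction i with
    | zero => simp
    | succ i ih =>
      rw [ih]
      simp [List.replicate_succ', ← mul_assoc, left_blank])

/-- Value of the right part of the tape. -/
def rval (l : ListBlank Γ) : Q :=
  l.liftOn (fun l => (l.map fun a => m.f (.sym a)).prod * m.f .right) (by
    rintro a _ ⟨i, rfl⟩
    induction i with
    | zero => simp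
    | succ i ih =>
      rw [ih]
      simp [List.replicate_succ', mul_assoc, right_blank])

theorem rval_mk (l : List Γ) :
    m.rval (ListBlank.mk l) = (l.map fun a => m.f (.sym a)).prod * m.f .right := rfl

theorem lval_mk (l : List Γ) :
    m.lval (ListBlank.mk l) = m.f .left * (l.reverse.map fun a => m.f (.sym a)).prod := rfl

theorem rval_cons (a : Γ) (l : ListBlank Γ) : m.rval (l.cons a) = m.f (.sym a) * m.rval l := by
  refine l.induction_on fun l => ?_
  rw [ListBlank.cons_mk, rval_mk, rval_mk]; simp [mul_assoc]

theorem lval_cons (a : Γ) (l : ListBlank Γ) : m.lval (l.cons a) = m.lval l * m.f (.sym a) := by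
  refine l.induction_on fun l => ?_
  rw [ListBlank.cons_mk, lval_mk, lval_mk]; simp [mul_assoc]

theorem lval_zero (l : ListBlank Γ) : m.lval l * m.f .zero = m.f .zero := by
  refine l.induction_on fun l => ?_
  rw [lval_mk]
  induction l with
  | nil => simp [mul_zero]
  | cons a l ih => simpa [mul_assoc, mul_zero] using ih

theorem zero_rval (l : ListBlank Γ) : m.f .zero * m.rval l = m.f .zero := by
  refine l.induction_on fun l => ?_
  rw [rval_mk]
  induction l with
  | nil => simp [zero_mul]
  | cons a l ih => simpa [← mul_assoc, zero_mul] using ih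

/-- Value of a configuration. -/
def val (q : S) (T : Tape Γ) : Q :=
  m.lval T.left * m.f (.st q) * m.f (.sym T.head) * m.rval T.right

theorem val_halt (q : S) (T : Tape Γ) (h : M q T.head = none) : m.val q T = m.f .zero := by
  rw [val, mul_assoc (m.lval _), halt_rel _ _ _ h, lval_zero, zero_rval]

theorem val_step (q q' : S) (T T' : Tape Γ) (h : TM0.step M ⟨q, T⟩ = some ⟨q', T'⟩) :
    m.val q T = m.val q' T' := by
  obtain ⟨a, l, r⟩ := T
  simp only [TM0.step, Option.map_eq_some_iff] at h
  obtain ⟨⟨p, s⟩, hM, he⟩ := h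
  injection he with h1 h2
  dsimp only at h1 h2 hM
  subst h1
  subst h2
  rcases s with (_ | _) | b
  · obtain ⟨b, l, rfl⟩ := l.exists_cons
    have := m.left_rel q q' a b hM
    simp only [val, Tape.move, lval_cons, rval_cons, ListBlank.head_cons, ListBlank.tail_cons]
    calc _ = m.lval l * (m.f (.sym b) * m.f (.st q) * m.f (.sym a)) * m.rval r := by
          simp only [mul_assoc]
      _ = _ := by rw [this]; simp only [mul_assoc]
  · obtain ⟨b, r, rfl⟩ := r.exists_cons
    have := m.right_rel q q' a hM
    simp only [val, Tape.move, lval_cons, rval_cons, ListBlank.head_cons, ListBlank.tail_cons]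
    calc _ = m.lval l * (m.f (.st q) * m.f (.sym a)) * m.f (.sym b) * m.rval r := by
          simp only [mul_assoc]
      _ = _ := by rw [this]; simp only [mul_assoc]
  · have := m.write_rel q q' a b hM
    simp only [val, Tape.write]
    rw [mul_assoc (m.lval l), this, ← mul_assoc]

theorem val_of_halts (hS : TM0.Supports M S) (c : TM0.Cfg Γ Λ) (hc : c.q ∈ S)
    (h : (StateTransition.eval (TM0.step M) c).Dom) : m.val ⟨c.q, hc⟩ c.Tape = m.f .zero := by
  obtain ⟨b, hb⟩ := Part.dom_iff_mem.1 h
  obtain ⟨hr, hn⟩ := StateTransition.mem_eval.1 hb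
  clear h hb
  induction hr using Relation.ReflTransGen.head_induction_on with
  | refl =>
    apply val_halt
    simpa [TM0.step] using hn
  | head h _ ih =>
    have h2 := TM0.step_supports M hS h hc
    rw [← ih h2]
    exact m.val_step ⟨_, hc⟩ ⟨_, h2⟩ _ _ h

end Model

theorem word_iff (hS : TM0.Supports M S) {m : ℕ} (e : Letter Γ S ≃ Fin m) (l : List Γ) :
    conGen (fun x y => (x, y) ∈
        (Prod.map (FreeMonoid.map e) (FreeMonoid.map e)) '' rels M S)
      (FreeMonoid.ofList ([e .left, e (.st ⟨default, hS.1⟩)] ++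
        l.map (fun a => e (.sym a)) ++ [e .right]))
      (FreeMonoid.ofList [e .zero]) ↔ (TM0.eval M l).Dom := by
  have hdom : (TM0.eval M l).Dom ↔
      (StateTransition.eval (TM0.step M) ⟨default, Tape.mk' (ListBlank.mk []) (ListBlank.mk l)⟩).Dom :=
    Iff.rfl
  rw [hdom]
  set c := conGen (fun x y => (x, y) ∈
        (Prod.map (FreeMonoid.map e) (FreeMonoid.map e)) '' rels M S) with hc
  constructor
  · intro h
    by_contra hn
    let φ : FreeMonoid (Fin m) →* Function.End (Sem Γ) :=
      FreeMonoid.lift (fun x => (act M S (e.symm x) : Function.End (Sem Γ)))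
    have hφ : φ.comp (FreeMonoid.map e) = actHom M S := by
      refine FreeMonoid.hom_eq fun x => ?_
      rw [MonoidHom.comp_apply, FreeMonoid.map_of]
      refine ((FreeMonoid.lift_eval_of _ _).trans ?_).trans (FreeMonoid.lift_eval_of _ _).symm
      exact congrArg (act M S) (e.symm_apply_apply x)
    have hle : c ≤ Con.ker φ := by
      refine Con.conGen_le.2 ?_
      rintro _ _ ⟨⟨x, y⟩, hxy, h⟩
      cases h
      have := hxy.2.2
      rw [← hφ] at this
      exact this
    have h1 : φ _ = φ _ := hle h
    have key : ∀ (z : List (Fin m)) s,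
        φ (FreeMonoid.ofList z) s = z.foldr (fun x => act M S (e.symm x)) s := by
      intro z s
      induction z with
      | nil => rfl
      | cons a z ih =>
        rw [FreeMonoid.ofList_cons, map_mul, List.foldr_cons, ← ih]
        rfl
    have h2 := congrFun h1 Sem.start
    rw [key, key] at h2
    have h3 : ∀ l : List Γ, List.foldr (fun x => act M S (e.symm x)) (.rt (ListBlank.mk []))
        (l.map (fun a => e (.sym a))) = .rt (ListBlank.mk l) := by
      intro l
      induction l with
      | nil => rfl
      | cons a l ih => simp only [List.map_cons, List.foldr_cons, ih]; simp [act]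
    simp only [List.foldr_append, List.foldr_cons, List.foldr_nil, Equiv.symm_apply_apply] at h2
    change act M S _ (act M S _ (List.foldr _ (.rt (ListBlank.mk [])) _)) = _ at h2
    rw [h3] at h2
    simp only [act] at h2
    injection h2 with h2
    have := congrFun h2 (ListBlank.mk [])
    exact (this.mp hn)
  · intro h
    let mo : Model M S c.Quotient :=
      { f := fun x => c.mk' (FreeMonoid.of (e x))
        hf := by
          intro p hp
          have hh : FreeMonoid.lift (fun x => c.mk' (FreeMonoid.of (e x))) =
            c.mk'.comp (FreeMonoid.map e) := by ext x; simp
          rw [hh]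
          exact (Con.eq _).2 (ConGen.Rel.of _ _ ⟨p, hp, rfl⟩) }
    have h1 := mo.val_of_halts hS _ hS.1 h
    have h2 : ∀ z : List (Fin m), c.mk' (FreeMonoid.ofList z) =
        (z.map fun x => c.mk' (FreeMonoid.of x)).prod := by
      intro z
      induction z with
      | nil => rfl
      | cons a z ih => rw [FreeMonoid.ofList_cons, map_mul, ih]; simp
    apply (Con.eq _).1
    change c.mk' _ = c.mk' _
    rw [h2, h2]
    simp only [List.map_cons, List.map_nil, List.prod_singleton]
    refine Eq.trans ?_ h1
    simp only [Model.val, Tape.mk', mul_assoc, ← Model.rval_cons, ListBlank.cons_head_tail]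
    rw [Model.rval_mk, Model.lval_mk]
    simp [mo, Function.comp_def]

end

theorem primrec_bits : Primrec Nat.bits := by
  have hb : ∀ n : ℕ, n ≠ 0 → n.bits = n.bodd :: (n / 2).bits := by
    intro n hn
    have h := Nat.bits_append_bit (n / 2) n.bodd (by
      intro h0
      have h1 : n = 1 := by omega
      subst h1; rfl)
    rwa [← Nat.div2_val, Nat.bit_bodd_div2] at h
  have hg : Primrec₂ (fun (_ : Unit) (l : List (List Bool)) =>
      if l.length = 0 then some [] else
        (l[l.length / 2]?).map (fun t => l.length.bodd :: t)) := by
    have hl : Primrec (fun p : Unit × List (List Bool) => p.2.length) :=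
      Primrec.list_length.comp Primrec.snd
    refine Primrec.ite (Primrec.eq.comp hl (Primrec.const 0)) (Primrec.const _) ?_
    refine Primrec.option_map
      (Primrec.list_getElem?.comp Primrec.snd (Primrec.nat_div.comp hl (Primrec.const 2))) ?_
    exact Primrec.list_cons.comp (Primrec.nat_bodd.comp (hl.comp Primrec.fst)) Primrec.snd
  have := Primrec.nat_strong_rec (fun (_ : Unit) n => n.bits) hg (by
    intro _ n
    by_cases hn : n = 0
    · subst hn; simp
    · have : n / 2 < n := by omega
      simp [hn, this, hb n hn])
  exact this.comp (Primrec.const ()) Primrec.id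

/-- The machine symbol for a bit. -/
def bitSym (b : Bool) : PartrecToTM2.Γ' := bif b then .bit1 else .bit0

theorem trPosNum_eq (p : PosNum) :
    PartrecToTM2.trPosNum p = (Nat.bits (p : ℕ)).map bitSym := by
  induction p with
  | one => simp [PartrecToTM2.trPosNum, bitSym]
  | bit0 p ih =>
    have hp : (p : ℕ) ≠ 0 := (PosNum.cast_pos p).ne'
    rw [PosNum.cast_bit0, ← two_mul, Nat.bit0_bits _ hp]
    simp [PartrecToTM2.trPosNum, bitSym, ih]
  | bit1 p ih =>
    rw [PosNum.cast_bit1, ← two_mul, Nat.bit1_bits]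
    simp [PartrecToTM2.trPosNum, bitSym, ih]

theorem trNat_eq (n : ℕ) : PartrecToTM2.trNat n = (Nat.bits n).map bitSym := by
  have h : ((n : Num) : ℕ) = n := Num.to_of_nat n
  rw [PartrecToTM2.trNat]
  conv_rhs => rw [← h]
  cases (n : Num) with
  | zero => simp [PartrecToTM2.trNum]
  | pos p => exact trPosNum_eq p

instance : Finite PartrecToTM2.K' := by
  let f : PartrecToTM2.K' → Fin 4 := fun x => match x with
    | .main => 0 | .rev => 1 | .aux => 2 | .stack => 3
  refine Finite.of_injective f ?_
  intro x y h
  cases x <;> cases y <;> simp_all [f]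

/-- The tape alphabet. -/
abbrev TapeSym : Type := TM2to1.Γ' PartrecToTM2.K' fun _ => PartrecToTM2.Γ'

/-- A tape symbol with the given content on the main stack. -/
def mkSym (b : Bool) (a : PartrecToTM2.Γ') : TapeSym :=
  (b, Function.update (fun _ => none) .main (some a))

theorem trInit_eq (n : ℕ) :
    TM2to1.trInit (Γ := fun _ : PartrecToTM2.K' => PartrecToTM2.Γ') .main
      (PartrecToTM2.trList [n]) =
    mkSym true .cons :: (Nat.bits n).reverse.map fun b => mkSym false (bitSym b) := by
  have h : (PartrecToTM2.trList [n]).reverse = .cons :: (Nat.bits n).reverse.map bitSym := by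
    simp [trNat_eq]
  unfold TM2to1.trInit
  rw [h]
  change mkSym true .cons ::
    List.map (fun a => mkSym false a) (List.map bitSym (Nat.bits n).reverse) = _
  rw [List.map_map]
  rfl

theorem exists_tm0 (f : ℕ →. ℕ) (hf : Nat.Partrec f) :
    ∃ (Γ Λ : Type) (_ : Inhabited Γ) (_ : Inhabited Λ) (_ : Finite Γ) (M : TM0.Machine Γ Λ)
      (S : Set Λ) (_ : TM0.Supports M S) (_ : Finite S) (a : Γ) (g : Bool → Γ), ∀ n : ℕ,
      (TM0.eval M (a :: (Nat.bits n).reverse.map g)).Dom ↔ (f n).Dom := by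
  obtain ⟨c, hc⟩ := ToPartrec.Code.exists_code
    (Nat.Partrec'.part_iff₁.2 (Partrec.nat_iff.2 hf))
  let iΛ : Inhabited PartrecToTM2.Λ' := ⟨PartrecToTM2.trNormal c .halt⟩
  let : Fintype PartrecToTM2.K' := Fintype.ofFinite _
  let M2 : PartrecToTM2.Λ' → TM2.Stmt (fun _ : PartrecToTM2.K' => PartrecToTM2.Γ')
    PartrecToTM2.Λ' (Option PartrecToTM2.Γ') := PartrecToTM2.tr
  have s2 : TM2.Supports M2 (PartrecToTM2.codeSupp c .halt) := PartrecToTM2.tr_supports c .halt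
  have s1 := TM2to1.tr_supports M2 s2
  have s0 := TM1to0.tr_supports _ s1
  refine ⟨_, _, inferInstance, inferInstance, inferInstance, TM1to0.tr (TM2to1.tr M2), _, s0,
    Finset.finite_toSet _, mkSym true .cons,
    fun b => mkSym false (bitSym b), fun n => ?_⟩
  rw [← trInit_eq, TM1to0.tr_eval, TM2to1.tr_eval_dom]
  have h1 : (TM2.eval M2 .main (PartrecToTM2.trList [n])).Dom ↔
      (StateTransition.eval (TM2.step PartrecToTM2.tr) (PartrecToTM2.init c [n])).Dom := by
    have : TM2.init .main (PartrecToTM2.trList [n]) = PartrecToTM2.init c [n] := by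
      unfold TM2.init PartrecToTM2.init
      congr 1
      funext k
      cases k <;> rfl
    rw [← this]
    rfl
  rw [h1, PartrecToTM2.tr_eval]
  have := hc (n ::ᵥ List.Vector.nil)
  have h2 : c.eval [n] = pure <$> f n := this
  rw [h2]
  rfl

theorem unsolvable : ∃ (m : ℕ) (R : Set (FreeMonoid (Fin m) × FreeMonoid (Fin m))), R.Finite ∧
      ¬ ComputablePred fun p : List (Fin m) × List (Fin m) =>
          conGen (fun x y : FreeMonoid (Fin m) => (x, y) ∈ R)
            (FreeMonoid.ofList p.1) (FreeMonoid.ofList p.2) := by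
  let f : ℕ →. ℕ := fun n => (Denumerable.ofNat Nat.Partrec.Code n).eval 0
  have hf : Partrec f :=
    Nat.Partrec.Code.eval_part.comp (Computable.ofNat _) (Computable.const 0)
  obtain ⟨Γ, Λ, _, _, _, M, S, hS, _, a, g, h⟩ := exists_tm0 f (Partrec.nat_iff.1 hf)
  obtain ⟨m, ⟨e⟩⟩ := Finite.exists_equiv_fin (Letter Γ S)
  refine ⟨m, _, (rels_finite M S).image (Prod.map (FreeMonoid.map e) (FreeMonoid.map e)), ?_⟩
  intro hcomp
  refine ComputablePred.halting_problem 0 (ComputablePred.computable_of_manyOneReducible ?_ hcomp)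
  refine ⟨fun c => ([e .left, e (.st ⟨default, hS.1⟩)] ++
    (a :: (Nat.bits (Encodable.encode c)).reverse.map g).map (fun a => e (.sym a)) ++ [e .right],
    [e .zero]), ?_, fun c => ?_⟩
  · refine Primrec.to_comp (Primrec.pair ?_ (Primrec.const _))
    have h1 : Primrec fun c : Nat.Partrec.Code =>
        (Nat.bits (Encodable.encode c)).reverse.map (fun b => e (.sym (g b))) :=
      Primrec.list_map (Primrec.list_reverse.comp (primrec_bits.comp Primrec.encode))
        ((Primrec.dom_finite (fun b => e (.sym (g b)))).comp Primrec.snd)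
    have h2 : Primrec fun c : Nat.Partrec.Code =>
        ([e .left, e (.st ⟨default, hS.1⟩), e (.sym a)] ++
          (Nat.bits (Encodable.encode c)).reverse.map (fun b => e (.sym (g b)))) ++ [e .right] :=
      Primrec.list_append.comp (Primrec.list_append.comp (Primrec.const _) h1) (Primrec.const _)
    exact h2.of_eq fun c => by simp [Function.comp_def]
  · refine Iff.trans ?_ (word_iff hS e _).symm
    rw [h]
    simp [f]

end WordProblem

/-- **Post (1947), Markov (1947):** there exists a finitely presented monoid
with unsolvable word problem. -/
theorem exists_finitely_presented_monoid_with_unsolvable_word_problem :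
    ∃ (m : ℕ) (R : Set (FreeMonoid (Fin m) × FreeMonoid (Fin m))), R.Finite ∧
      ¬ ComputablePred fun p : List (Fin m) × List (Fin m) =>
          conGen (fun x y : FreeMonoid (Fin m) => (x, y) ∈ R)
            (FreeMonoid.ofList p.1) (FreeMonoid.ofList p.2) := 
  WordProblem.unsolvable
end

section
/- (Hamilton 1856, Dyck 1882) The group presented by ⟨a, b | a⁵ = b² = (ab)³ = 1⟩, i.e. the quotient of the free group on two generators by the normal closure of {a⁵, b², (ab)³}, is isomorphic (as a group, via a MulEquiv) to the alternating group A₅, the subgroup of even permutations of a five-element set. -/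
namespace DyckA5

/-- Normal forms, with natural number exponents. -/
def NF {G : Type*} [Group G] (a b g : G) : Prop :=
  (∃ k : ℕ, g = a ^ k) ∨ (∃ i k : ℕ, g = a ^ i * b * a ^ k) ∨
  (∃ i k : ℕ, g = a ^ i * b * a ^ 2 * b * a ^ k) ∨
  (∃ k : ℕ, g = b * a ^ 3 * b * a ^ 2 * b * a ^ k)

section
variable {G : Type*} [Group G] {a b : G}

theorem pow_mod_five (ha : a ^ 5 = 1) (n : ℕ) : a ^ n = a ^ (n % 5) :=
  pow_eq_pow_mod n ha

/-- Basic rewriting facts. -/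
theorem facts (ha : a ^ 5 = 1) (hb : b ^ 2 = 1) (hab : (a * b) ^ 3 = 1) :
    b * b = 1 ∧ b * a * b = a ^ 4 * b * a ^ 4 ∧ b * a ^ 4 * b = a * b * a ∧
    b * a ^ 3 * b = a * b * a ^ 2 * b * a ∧ b * a ^ 2 * b = a ^ 4 * b * a ^ 3 * b * a ^ 4 := by
  have hbb : b * b = 1 := by rw [← pow_two, hb]
  have hbi : b⁻¹ = b := inv_eq_of_mul_eq_one_left hbb
  have hai : a ^ 4 = a⁻¹ := by
    apply eq_inv_of_mul_eq_one_left; rw [← pow_succ, ha]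
  have hai3 : a ^ 3 = a⁻¹ * a⁻¹ := by
    rw [← hai, ← pow_add, pow_mod_five ha (4 + 4)]
  have h3 : a * b * a * b * a * b = 1 := by
    rw [← hab]; simp only [pow_succ, pow_zero, one_mul, mul_assoc]
  have h1 : b * a * b = a⁻¹ * b * a⁻¹ := by
    have : b * a * b = a⁻¹ * (a * b * a * b * a * b) * b⁻¹ * a⁻¹ := by group
    rw [this, h3, hbi]; group
  have h4 : b * a⁻¹ * b = a * b * a := by
    have := congrArg (·⁻¹) h1
    simpa [mul_assoc, hbi] using this
  have h2 : b * a ^ 2 * b = a⁻¹ * b * (a⁻¹ * a⁻¹) * b * a⁻¹ := by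
    calc b * a ^ 2 * b = (b * a * b) * b⁻¹ * b⁻¹ * (b * a * b) := by simp [pow_two, mul_assoc]
      _ = (b * a * b) * (b * b) * (b * a * b) := by rw [hbi]; simp only [mul_assoc]
      _ = (b * a * b) * (b * a * b) := by rw [hbb, mul_one]
      _ = _ := by
        rw [h1]; group
  refine ⟨hbb, by rw [hai, h1], by rw [hai, h4], ?_, by rw [hai, hai3, h2]⟩
  rw [hai3]
  have : b * (a⁻¹ * a⁻¹) * b = a * (a⁻¹ * b * (a⁻¹ * a⁻¹) * b * a⁻¹) * a := by group
  rw [this, ← h2]; simp only [mul_assoc]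

theorem z_rel (ha : a ^ 5 = 1) (hb : b ^ 2 = 1) (hab : (a * b) ^ 3 = 1) :
    a * (b * a ^ 3 * b * a ^ 2 * b) = b * a ^ 3 * b * a ^ 2 * b * a ^ 4 := by
  obtain ⟨hbb, h1, h4, h3, h2⟩ := facts ha hb hab
  have e : b * a ^ 3 * b * a ^ 2 * b = a * (b * a ^ 3 * b * a ^ 2 * b) * a := by
    calc b * a ^ 3 * b * a ^ 2 * b = a * b * a ^ 2 * b * a * a ^ 2 * b := by rw [h3]
      _ = a * b * a ^ 2 * (b * a ^ 3 * b) := by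
        rw [pow_succ' a 2]; simp only [mul_assoc]
      _ = a * b * a ^ 2 * (a * b * a ^ 2 * b * a) := by rw [h3]
      _ = _ := by rw [pow_succ a 2]; simp only [mul_assoc]
  have ha' : a * a ^ 4 = 1 := by rw [← pow_succ', ha]
  calc a * (b * a ^ 3 * b * a ^ 2 * b)
      = a * (b * a ^ 3 * b * a ^ 2 * b) * (a * a ^ 4) := by rw [ha', mul_one]
    _ = (a * (b * a ^ 3 * b * a ^ 2 * b) * a) * a ^ 4 := by simp only [mul_assoc]
    _ = _ := by rw [← e]

theorem NF_a (ha : a ^ 5 = 1) (hb : b ^ 2 = 1) (hab : (a * b) ^ 3 = 1) {x : G}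
    (hx : NF a b x) : NF a b (a * x) := by
  rcases hx with ⟨k, rfl⟩ | ⟨i, k, rfl⟩ | ⟨i, k, rfl⟩ | ⟨k, rfl⟩
  · exact Or.inl ⟨k + 1, (pow_succ' a k).symm⟩
  · exact Or.inr (Or.inl ⟨i + 1, k, by rw [pow_succ' a i]; simp only [mul_assoc]⟩)
  · exact Or.inr (Or.inr (Or.inl ⟨i + 1, k, by rw [pow_succ' a i]; simp only [mul_assoc]⟩))
  · refine Or.inr (Or.inr (Or.inr ⟨4 + k, ?_⟩))
    rw [← mul_assoc, z_rel ha hb hab, pow_add a 4 k]; simp only [mul_assoc]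

theorem NF_a_pow (ha : a ^ 5 = 1) (hb : b ^ 2 = 1) (hab : (a * b) ^ 3 = 1) {x : G}
    (hx : NF a b x) (n : ℕ) : NF a b (a ^ n * x) := by
  induction n with
  | zero => simpa using hx
  | succ n ih => rw [pow_succ', mul_assoc]; exact NF_a ha hb hab ih

theorem NF_pow_a (_ha : a ^ 5 = 1) {x : G}
    (hx : NF a b x) (n : ℕ) : NF a b (x * a ^ n) := by
  rcases hx with ⟨k, rfl⟩ | ⟨i, k, rfl⟩ | ⟨i, k, rfl⟩ | ⟨k, rfl⟩
  · exact Or.inl ⟨k + n, (pow_add a k n).symm⟩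
  · exact Or.inr (Or.inl ⟨i, k + n, by rw [pow_add]; simp only [mul_assoc]⟩)
  · exact Or.inr (Or.inr (Or.inl ⟨i, k + n, by rw [pow_add]; simp only [mul_assoc]⟩))
  · exact Or.inr (Or.inr (Or.inr ⟨k + n, by rw [pow_add]; simp only [mul_assoc]⟩))

theorem NF_b (ha : a ^ 5 = 1) (hb : b ^ 2 = 1) (hab : (a * b) ^ 3 = 1) {x : G}
    (hx : NF a b x) : NF a b (b * x) := by
  obtain ⟨hbb, h1, h4, h3, h2⟩ := facts ha hb hab
  have L1 : ∀ i < 5, NF a b (b * (a ^ i * b)) := by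
    intro i hi
    interval_cases i
    · exact Or.inl ⟨0, by simp [hbb]⟩
    · exact Or.inr (Or.inl ⟨4, 4, by rw [← h1]; simp [mul_assoc]⟩)
    · exact Or.inr (Or.inr (Or.inl ⟨0, 0, by simp [mul_assoc]⟩))
    · exact Or.inr (Or.inr (Or.inl ⟨1, 1, by rw [pow_one, ← h3]; simp [mul_assoc]⟩))
    · exact Or.inr (Or.inl ⟨1, 1, by rw [pow_one, ← h4]; simp [mul_assoc]⟩)
  have L2 : ∀ i < 5, NF a b (b * (a ^ i * b * a ^ 2 * b)) := by
    intro i hi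
    interval_cases i
    · refine Or.inr (Or.inl ⟨2, 0, ?_⟩)
      calc b * (a ^ 0 * b * a ^ 2 * b) = b * b * a ^ 2 * b := by simp [mul_assoc]
        _ = _ := by rw [hbb]; simp
    · have e : b * (a ^ 1 * b * a ^ 2 * b) = a ^ 4 * (b * (a ^ 1 * b)) := by
        calc b * (a ^ 1 * b * a ^ 2 * b) = (b * a * b) * a ^ 2 * b := by simp [mul_assoc]
          _ = a ^ 4 * b * (a ^ 5 * a) * b := by
            rw [h1, ← pow_succ]
            rw [show a ^ (5 + 1) = a ^ 4 * a ^ 2 by rw [← pow_add]]; simp only [mul_assoc]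
          _ = _ := by rw [ha]; simp [mul_assoc]
      rw [e]
      exact NF_a_pow ha hb hab (L1 1 (by norm_num)) 4
    · have e : b * (a ^ 2 * b * a ^ 2 * b) = a ^ 4 * (b * a ^ 2 * b) * a ^ 4 := by
        calc b * (a ^ 2 * b * a ^ 2 * b) = (b * a ^ 2 * b) * a ^ 2 * b := by simp [mul_assoc]
          _ = a ^ 4 * b * a ^ 3 * b * (a ^ 4 * a ^ 2) * b := by
            rw [h2]; simp only [mul_assoc]
          _ = a ^ 4 * b * a ^ 3 * (b * a * b) := by
            rw [← pow_add, pow_mod_five ha (4 + 2)]; simp [mul_assoc]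
          _ = a ^ 4 * b * (a ^ 3 * a ^ 4) * b * a ^ 4 := by rw [h1]; simp only [mul_assoc]
          _ = _ := by rw [← pow_add, pow_mod_five ha (3 + 4)]; simp [mul_assoc]
      rw [e]
      exact NF_pow_a ha (NF_a_pow ha hb hab (by rw [mul_assoc]; exact L1 2 (by norm_num)) 4) 4
    · exact Or.inr (Or.inr (Or.inr ⟨0, by simp [mul_assoc]⟩))
    · have e : b * (a ^ 4 * b * a ^ 2 * b) = a ^ 1 * (b * (a ^ 3 * b)) := by
        calc b * (a ^ 4 * b * a ^ 2 * b) = (b * a ^ 4 * b) * a ^ 2 * b := by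
              simp only [mul_assoc]
          _ = _ := by rw [h4, pow_succ' a 2]; simp [mul_assoc]
      rw [e]
      exact NF_a_pow ha hb hab (L1 3 (by norm_num)) 1
  rcases hx with ⟨k, rfl⟩ | ⟨i, k, rfl⟩ | ⟨i, k, rfl⟩ | ⟨k, rfl⟩
  · exact Or.inr (Or.inl ⟨0, k, by simp⟩)
  · rw [pow_mod_five ha i, ← mul_assoc]
    exact NF_pow_a ha (L1 (i % 5) (Nat.mod_lt _ (by norm_num))) k
  · rw [pow_mod_five ha i, ← mul_assoc]
    exact NF_pow_a ha (L2 (i % 5) (Nat.mod_lt _ (by norm_num))) k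
  · refine Or.inr (Or.inr (Or.inl ⟨3, k, ?_⟩))
    calc b * (b * a ^ 3 * b * a ^ 2 * b * a ^ k)
        = (b * b) * (a ^ 3 * b * a ^ 2 * b * a ^ k) := by simp only [mul_assoc]
      _ = _ := by rw [hbb, one_mul]

theorem NF_all (ha : a ^ 5 = 1) (hb : b ^ 2 = 1) (hab : (a * b) ^ 3 = 1)
    (hgen : Subgroup.closure {a, b} = ⊤) (g : G) : NF a b g := by
  have hai : a⁻¹ = a ^ 4 := by
    symm; apply eq_inv_of_mul_eq_one_left; rw [← pow_succ, ha]
  have hbi : b⁻¹ = b := inv_eq_of_mul_eq_one_left (by rw [← pow_two, hb])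
  have key : (∀ x, NF a b x → NF a b (g * x)) ∧ (∀ x, NF a b x → NF a b (g⁻¹ * x)) := by
    have hg : g ∈ Subgroup.closure {a, b} := by rw [hgen]; trivial
    induction hg using Subgroup.closure_induction with
    | mem y hy =>
      rcases hy with rfl | rfl
      · exact ⟨fun x hx => NF_a ha hb hab hx, fun x hx => by
          rw [hai]; exact NF_a_pow ha hb hab hx 4⟩
      · rw [hbi]
        exact ⟨fun x hx => NF_b ha hb hab hx, fun x hx => NF_b ha hb hab hx⟩
    | one => simp
    | mul x y _ _ hx hy =>
      refine ⟨fun w hw => ?_, fun w hw => ?_⟩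
      · rw [mul_assoc]; exact hx.1 _ (hy.1 _ hw)
      · rw [mul_inv_rev, mul_assoc]; exact hy.2 _ (hx.2 _ hw)
    | inv x _ hx => exact ⟨hx.2, by rw [inv_inv]; exact hx.1⟩
  have := key.1 1 (Or.inl ⟨0, by simp⟩)
  rwa [mul_one] at this

/-- Enumeration of the normal forms by a type with 60 elements. -/
def enum (a b : G) : (Fin 5 ⊕ Fin 5 × Fin 5) ⊕ (Fin 5 × Fin 5 ⊕ Fin 5) → G
  | .inl (.inl k) => a ^ (k : ℕ)
  | .inl (.inr (i, k)) => a ^ (i : ℕ) * b * a ^ (k : ℕ)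
  | .inr (.inl (i, k)) => a ^ (i : ℕ) * b * a ^ 2 * b * a ^ (k : ℕ)
  | .inr (.inr k) => b * a ^ 3 * b * a ^ 2 * b * a ^ (k : ℕ)

theorem enum_surjective (ha : a ^ 5 = 1) (hb : b ^ 2 = 1) (hab : (a * b) ^ 3 = 1)
    (hgen : Subgroup.closure {a, b} = ⊤) : Function.Surjective (enum a b) := by
  have r : ∀ n : ℕ, ∃ m : Fin 5, a ^ n = a ^ (m : ℕ) := fun n =>
    ⟨⟨n % 5, Nat.mod_lt _ (by norm_num)⟩, pow_mod_five ha n⟩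
  intro g
  rcases NF_all ha hb hab hgen g with ⟨k, rfl⟩ | ⟨i, k, rfl⟩ | ⟨i, k, rfl⟩ | ⟨k, rfl⟩
  · obtain ⟨k', hk⟩ := r k
    exact ⟨.inl (.inl k'), hk.symm⟩
  · obtain ⟨k', hk⟩ := r k
    obtain ⟨i', hi⟩ := r i
    exact ⟨.inl (.inr (i', k')), by rw [hi, hk]; rfl⟩
  · obtain ⟨k', hk⟩ := r k
    obtain ⟨i', hi⟩ := r i
    exact ⟨.inr (.inl (i', k')), by rw [hi, hk]; rfl⟩
  · obtain ⟨k', hk⟩ := r k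
    exact ⟨.inr (.inr k'), by rw [hk]; rfl⟩

theorem finite_card (ha : a ^ 5 = 1) (hb : b ^ 2 = 1) (hab : (a * b) ^ 3 = 1)
    (hgen : Subgroup.closure {a, b} = ⊤) : Finite G ∧ Nat.card G ≤ 60 := by
  have h := enum_surjective ha hb hab hgen
  refine ⟨Finite.of_surjective _ h, ?_⟩
  have := Nat.card_le_card_of_surjective _ h
  simpa [Nat.card_eq_fintype_card] using this

end

/-- A five-cycle. -/
def pa : alternatingGroup (Fin 5) :=
  ⟨finRotate 5, Equiv.Perm.mem_alternatingGroup.2 (by decide)⟩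

/-- A product of two transpositions. -/
def pb : alternatingGroup (Fin 5) := ⟨Equiv.swap 0 1 * Equiv.swap 2 3,
  Equiv.Perm.mem_alternatingGroup.2 (by decide)⟩

theorem pa_pow : pa ^ 5 = 1 := by decide
theorem pb_pow : pb ^ 2 = 1 := by decide
theorem pab_pow : (pa * pb) ^ 3 = 1 := by decide

theorem card_A5 : Nat.card (alternatingGroup (Fin 5)) = 60 := by
  rw [nat_card_alternatingGroup]; simp [Nat.factorial]

theorem eq_top_of_mem (H : Subgroup (alternatingGroup (Fin 5))) (h1 : pa ∈ H) (h2 : pb ∈ H) :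
    H = ⊤ := by
  have o5 : orderOf pa = 5 :=
    haveI : Fact (Nat.Prime 5) := ⟨by norm_num⟩
    orderOf_eq_prime pa_pow (by decide)
  have o2 : orderOf pb = 2 := orderOf_eq_prime pb_pow (by decide)
  have o3 : orderOf (pa * pb) = 3 := orderOf_eq_prime pab_pow (by decide)
  have d5 : 5 ∣ Nat.card H := by
    have := Subgroup.orderOf_dvd_natCard H h1; rwa [o5] at this
  have d2 : 2 ∣ Nat.card H := by
    have := Subgroup.orderOf_dvd_natCard H h2; rwa [o2] at this
  have d3 : 3 ∣ Nat.card H := by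
    have := Subgroup.orderOf_dvd_natCard H (H.mul_mem h1 h2); rwa [o3] at this
  have d30 : 30 ∣ Nat.card H := by omega
  have hm := H.card_mul_index
  rw [card_A5] at hm
  obtain ⟨c, hc⟩ := d30
  have hci : c * H.index = 2 := by
    rw [hc] at hm; nlinarith
  have hi2 : H.index ∣ 2 := ⟨c, by rw [← hci, mul_comm]⟩
  rcases (Nat.dvd_prime Nat.prime_two).1 hi2 with h | h
  · exact Subgroup.index_eq_one.1 h
  · haveI := Subgroup.normal_of_index_eq_two h
    haveI := alternatingGroup.isSimpleGroup_five
    rcases Subgroup.Normal.eq_bot_or_eq_top (H := H) inferInstance with e | e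
    · rw [e, Subgroup.mem_bot] at h1
      exact absurd h1 (by decide)
    · exact e

end DyckA5

open DyckA5 in
/-- **Hamilton (1856), Dyck (1882):** the group `⟨a, b ∣ a⁵ = b² = (ab)³ = 1⟩`
is isomorphic to the alternating group `A₅`. -/
theorem presented_group_iso_alternating_group_A5 :
    Nonempty
      (PresentedGroup
          ({(FreeGroup.of 0) ^ 5, (FreeGroup.of 1) ^ 2,
            (FreeGroup.of 0 * FreeGroup.of 1) ^ 3} : Set (FreeGroup (Fin 2))) ≃*
        alternatingGroup (Fin 5)) := by
  set rels : Set (FreeGroup (Fin 2)) := {(FreeGroup.of 0) ^ 5, (FreeGroup.of 1) ^ 2,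
            (FreeGroup.of 0 * FreeGroup.of 1) ^ 3} with hrels
  have hf : ∀ r ∈ rels, FreeGroup.lift ![pa, pb] r = 1 := by
    rintro r (rfl | rfl | rfl)
    · simpa using pa_pow
    · simpa using pb_pow
    · simpa using pab_pow
  let φ := PresentedGroup.toGroup hf
  have ha : (PresentedGroup.of 0 : PresentedGroup rels) ^ 5 = 1 :=
    PresentedGroup.one_of_mem (rels := rels) (x := (FreeGroup.of 0) ^ 5) (by simp [hrels])
  have hb : (PresentedGroup.of 1 : PresentedGroup rels) ^ 2 = 1 :=
    PresentedGroup.one_of_mem (rels := rels) (x := (FreeGroup.of 1) ^ 2) (by simp [hrels])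
  have hab : ((PresentedGroup.of 0 : PresentedGroup rels) * PresentedGroup.of 1) ^ 3 = 1 :=
    PresentedGroup.one_of_mem (rels := rels) (x := (FreeGroup.of 0 * FreeGroup.of 1) ^ 3)
      (by simp [hrels])
  have hgen : Subgroup.closure {(PresentedGroup.of 0 : PresentedGroup rels),
      PresentedGroup.of 1} = ⊤ := by
    rw [← PresentedGroup.closure_range_of rels]
    congr 1
    ext x
    simp [Fin.exists_fin_two, eq_comm]
  obtain ⟨hfin, hcard⟩ := finite_card ha hb hab hgen
  have hsurj : Function.Surjective φ := by
    rw [← MonoidHom.range_eq_top]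
    exact eq_top_of_mem _ ⟨PresentedGroup.of 0, PresentedGroup.toGroup.of hf⟩
      ⟨PresentedGroup.of 1, PresentedGroup.toGroup.of hf⟩
  have hle := Nat.card_le_card_of_surjective _ hsurj
  rw [card_A5] at hle
  have hbij : Function.Bijective φ :=
    (Nat.bijective_iff_surjective_and_card φ).2 ⟨hsurj, by rw [card_A5]; omega⟩
  exact ⟨MulEquiv.ofBijective φ hbij⟩
end
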